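/- Let V ∈ 𝒫^{s,p}_q(ℝⁿ), g ∈ W^{s,p}(ℝⁿ), K ∈ 𝒦_p, and let u ∈ Y^{s,p}_g(Ω)^+ be a weak supersolution of L^p_K u + V|u|^{p−2}u = 0 in Ω with exterior data g, with u ≥ 0 in B_R(x₀) ⊂ Ω. For a, b ∈ (0,1) set v(x) = ln( (a+b)/(u(x)+b) ). Then there is a constant C > 0 depending only on n, s, p, λ, Λ and Ω such that for every r ∈ (0, R/2): ⨍_{B_r(x₀)} | v(x) − v_{B_r(x₀)} |^p dx ≤ C·[ b^{−(p−1)}·(r/R)^{ps}·[𝒯_R(u_−;x₀)]^{p−1} + (1 + ‖V_+‖_{L^q(Ω)}) ], where v_B denotes the average of v over the ball B and u_− = max{−u,0}. In particular, v has bounded mean oscillation on B_R(x₀) with sup_{r∈(0,R/2)} ⨍_{B_r(x₀)}|v − v_{B_r(x₀)}| dx ≤ C'·[ b^{−(p−1)}·[𝒯_R(u_−;x₀)]^{p−1} + (1 + ‖V_+‖_{L^q(Ω)}) ]^{1/p} for a constant C' of the same type. -/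

import Mathlib

open MeasureTheory Real Set Metric Filter ENNReal

noncomputable section

abbrev Rn (n : ℕ) : Type := EuclideanSpace ℝ (Fin n)

namespace NLS

/-- The normalization constant `c_{n,p,s}`. -/
def cnps (n : ℕ) (p s : ℝ) : ℝ :=
  Real.Gamma (((n : ℝ) + p) / 2) * p * (1 - s) /
    (Real.pi ^ (((n : ℝ) - 1) / 2) * Real.Gamma ((p + 1) / 2))

/-- Membership in the kernel class `𝒦_p`. -/
def KernelClass (n : ℕ) (p s lam Lam : ℝ) (K : Rn n → ℝ) : Prop :=
  Measurable K ∧ (∀ y, K (-y) = K y) ∧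
    ∀ y : Rn n, y ≠ 0 →
      cnps n p s * lam * ‖y‖ ^ (-(n : ℝ) - p * s) ≤ K y ∧
        K y ≤ cnps n p s * Lam * ‖y‖ ^ (-(n : ℝ) - p * s)

/-- `H_p(t) = |t|^{p-2} t`. -/
def Hp (p t : ℝ) : ℝ := |t| ^ (p - 2) * t

/-- Positive part of a function. -/
def plusPart {n : ℕ} (f : Rn n → ℝ) : Rn n → ℝ := fun x => max (f x) 0

/-- Negative part of a function. -/
def minusPart {n : ℕ} (f : Rn n → ℝ) : Rn n → ℝ := fun x => max (-f x) 0

/-- The Gagliardo integrand `|u(x)-u(y)|^p |x-y|^{-n-ps}`. -/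
def gagliardoIntegrand (n : ℕ) (p s : ℝ) (u : Rn n → ℝ) (z : Rn n × Rn n) : ℝ :=
  |u z.1 - u z.2| ^ p * ‖z.1 - z.2‖ ^ (-(n : ℝ) - p * s)

/-- The Gagliardo seminorm `[u]_{W^{s,p}(U)}`. -/
def gagliardoSemi (n : ℕ) (p s : ℝ) (U : Set (Rn n)) (u : Rn n → ℝ) : ℝ :=
  (∫ z in U ×ˢ U, gagliardoIntegrand n p s u z) ^ (1 / p)

/-- The `L^p(U)` norm. -/
def lpNormOn (n : ℕ) (p : ℝ) (U : Set (Rn n)) (u : Rn n → ℝ) : ℝ :=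
  (∫ x in U, |u x| ^ p) ^ (1 / p)

/-- The `W^{s,p}(U)` norm. -/
def wspNorm (n : ℕ) (p s : ℝ) (U : Set (Rn n)) (u : Rn n → ℝ) : ℝ :=
  lpNormOn n p U u + gagliardoSemi n p s U u

/-- Membership in the fractional Sobolev space `W^{s,p}(U)`. -/
def MemWsp (n : ℕ) (p s : ℝ) (U : Set (Rn n)) (u : Rn n → ℝ) : Prop :=
  Measurable u ∧ IntegrableOn (fun x => |u x| ^ p) U ∧
    IntegrableOn (gagliardoIntegrand n p s u) (U ×ˢ U)

/-- `ℝ^{2n}_Ω = ℝ^{2n} ∖ (Ωᶜ × Ωᶜ)`. -/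
def R2n (n : ℕ) (Ω : Set (Rn n)) : Set (Rn n × Rn n) := {z | z.1 ∈ Ω ∨ z.2 ∈ Ω}

/-- Membership in `X^{s,p}(Ω)`. -/
def MemX (n : ℕ) (p s : ℝ) (Ω : Set (Rn n)) (u : Rn n → ℝ) : Prop :=
  Measurable u ∧ IntegrableOn (fun x => |u x| ^ p) Ω ∧
    IntegrableOn (gagliardoIntegrand n p s u) (R2n n Ω)

/-- Membership in `X^{s,p}_0(Ω)`. -/
def MemX0 (n : ℕ) (p s : ℝ) (Ω : Set (Rn n)) (u : Rn n → ℝ) : Prop :=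
  MemX n p s Ω u ∧ ∀ᵐ x ∂(volume : Measure (Rn n)), x ∉ Ω → u x = 0

/-- The norm `‖u‖_{X^{s,p}_0(Ω)}`. -/
def normX0 (n : ℕ) (p s : ℝ) (Ω : Set (Rn n)) (u : Rn n → ℝ) : ℝ :=
  (∫ z in R2n n Ω, gagliardoIntegrand n p s u z) ^ (1 / p)

/-- Open axis-parallel cube with center `c` and half side-length `h`. -/
def cube (n : ℕ) (c : Fin n → ℝ) (h : ℝ) : Set (Rn n) := {y | ∀ i, |y i - c i| < h}

/-- The `(A_1,A_1)` characteristic `[υ,ω]_{(A_1,A_1)}`. -/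
def A1const (n : ℕ) (υ ω : Rn n → ℝ) : ℝ≥0∞ :=
  ⨆ (c : Fin n → ℝ) (h : ℝ) (_ : 0 < h),
    ENNReal.ofReal (⨍ y in cube n c h, υ y) *
      essSup (fun y => (ENNReal.ofReal (ω y))⁻¹) (volume.restrict (cube n c h))

/-- `(υ,ω)` belongs to the `(A_1,A_1)`-Muckenhoupt class. -/
def A1pair (n : ℕ) (υ ω : Rn n → ℝ) : Prop := A1const n υ ω < ⊤

/-- `ω` belongs to the `A_1`-Muckenhoupt class. -/
def A1 (n : ℕ) (ω : Rn n → ℝ) : Prop := A1pair n ω ω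

/-- Membership in the potential class `𝒫^{s,p}_q(ℝⁿ)`. -/
structure IsPotential (n : ℕ) (p s q : ℝ) (V : Rn n → ℝ) : Prop where
  measurable : Measurable V
  minusPart_locInt : LocallyIntegrable (minusPart V) volume
  plusPart_locLq : LocallyIntegrable (fun x => plusPart V x ^ q) volume
  exists_b : ∃ b : Rn n → ℝ, Measurable b ∧ (∀ᵐ x ∂(volume : Measure (Rn n)), 0 < b x) ∧
    (∃ M : ℝ, ∀ x, |b x| ≤ M) ∧
    LocallyIntegrable (fun x => (plusPart V x / b x) ^ q) volume ∧
    ∀ i : ℕ, 0 < i →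
      A1pair n (minusPart V) (fun x => max (b x) (1 / (i : ℝ)) / b x * plusPart V x) ∧
      A1 n (fun x => max (b x) (1 / (i : ℝ)) / b x * plusPart V x)

/-- Membership in the weighted class `L^p_V(Ω)`. -/
def MemLpV (n : ℕ) (p : ℝ) (Ω : Set (Rn n)) (V u : Rn n → ℝ) : Prop :=
  IntegrableOn (fun x => |u x| ^ p * plusPart V x) Ω ∧
    IntegrableOn (fun x => |u x| ^ p * minusPart V x) Ω

/-- Membership in `Y^{s,p}(Ω)`. -/
def MemY (n : ℕ) (p s : ℝ) (Ω : Set (Rn n)) (V u : Rn n → ℝ) : Prop :=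
  MemX n p s Ω u ∧ MemLpV n p Ω V u

/-- Membership in `Y^{s,p}_0(Ω)`. -/
def MemY0 (n : ℕ) (p s : ℝ) (Ω : Set (Rn n)) (V u : Rn n → ℝ) : Prop :=
  MemX0 n p s Ω u ∧ MemLpV n p Ω V u

/-- Membership in `Y^{s,p}_g(Ω)^+`. -/
def MemYgPlus (n : ℕ) (p s : ℝ) (Ω : Set (Rn n)) (V g u : Rn n → ℝ) : Prop :=
  MemY n p s Ω V u ∧ MemY0 n p s Ω V (fun x => max (g x - u x) 0)

/-- Membership in `Y^{s,p}_g(Ω)^-`. -/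
def MemYgMinus (n : ℕ) (p s : ℝ) (Ω : Set (Rn n)) (V g u : Rn n → ℝ) : Prop :=
  MemY n p s Ω V u ∧ MemY0 n p s Ω V (fun x => max (u x - g x) 0)

/-- Membership in `Y^{s,p}_g(Ω)`. -/
def MemYg (n : ℕ) (p s : ℝ) (Ω : Set (Rn n)) (V g u : Rn n → ℝ) : Prop :=
  MemYgPlus n p s Ω V g u ∧ MemYgMinus n p s Ω V g u

/-- The pairing `⟨u,φ⟩_{H_p,K}`. -/
def pairing (n : ℕ) (p : ℝ) (K u φ : Rn n → ℝ) : ℝ :=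
  ∫ z : Rn n × Rn n, Hp p (u z.1 - u z.2) * (φ z.1 - φ z.2) * K (z.1 - z.2)

/-- `u` is a weak subsolution of `L^p_K u + V|u|^{p-2}u = 0` in `Ω` with exterior data `g`. -/
def WeakSubsolution (n : ℕ) (p s : ℝ) (Ω : Set (Rn n)) (K V g u : Rn n → ℝ) : Prop :=
  MemYgMinus n p s Ω V g u ∧
    ∀ φ : Rn n → ℝ, MemY0 n p s Ω V φ → (∀ x, 0 ≤ φ x) →
      pairing n p K u φ + ∫ x : Rn n, V x * (|u x| ^ (p - 2) * u x) * φ x ≤ 0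

/-- `u` is a weak supersolution of `L^p_K u + V|u|^{p-2}u = 0` in `Ω` with exterior data `g`. -/
def WeakSupersolution (n : ℕ) (p s : ℝ) (Ω : Set (Rn n)) (K V g u : Rn n → ℝ) : Prop :=
  MemYgPlus n p s Ω V g u ∧
    ∀ φ : Rn n → ℝ, MemY0 n p s Ω V φ → (∀ x, 0 ≤ φ x) →
      0 ≤ pairing n p K u φ + ∫ x : Rn n, V x * (|u x| ^ (p - 2) * u x) * φ x

/-- `u` is a weak solution of `L^p_K u + V|u|^{p-2}u = 0` in `Ω` with exterior data `g`. -/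
def WeakSolution (n : ℕ) (p s : ℝ) (Ω : Set (Rn n)) (K V g u : Rn n → ℝ) : Prop :=
  MemYg n p s Ω V g u ∧
    ∀ φ : Rn n → ℝ, MemY0 n p s Ω V φ →
      pairing n p K u φ + ∫ x : Rn n, V x * (|u x| ^ (p - 2) * u x) * φ x = 0

/-- The surface measure `|S^{n-1}|` of the unit sphere of `ℝⁿ`. -/
def sphereArea (n : ℕ) : ℝ := n * (volume (Metric.ball (0 : Rn n) 1)).toReal

/-- The nonlocal tail `𝒯_r(u;x₀)`. -/
def tail (n : ℕ) (p s : ℝ) (u : Rn n → ℝ) (x₀ : Rn n) (r : ℝ) : ℝ :=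
  (p * s / sphereArea n * r ^ (p * s) *
      ∫ y in (Metric.ball x₀ r)ᶜ, |u y| ^ (p - 1) * ‖y - x₀‖ ^ (-(n : ℝ) - p * s)) ^ (1 / (p - 1))

def supOn {n : ℕ} (u : Rn n → ℝ) (B : Set (Rn n)) : ℝ := sSup (u '' B)
def infOn {n : ℕ} (u : Rn n → ℝ) (B : Set (Rn n)) : ℝ := sInf (u '' B)
def oscOn {n : ℕ} (u : Rn n → ℝ) (B : Set (Rn n)) : ℝ := supOn u B - infOn u B

/-- The `L^q(Ω)` norm, used for `‖V₊‖_{L^q(Ω)}`. -/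
def lqNormOn (n : ℕ) (q : ℝ) (Ω : Set (Rn n)) (f : Rn n → ℝ) : ℝ :=
  (∫ x in Ω, |f x| ^ q) ^ (1 / q)

/-- The Hölder seminorm `[u]_{C^ε(B)}`. -/
def holderSemi {n : ℕ} (ε : ℝ) (B : Set (Rn n)) (u : Rn n → ℝ) : ℝ :=
  sSup ((fun z : Rn n × Rn n => |u z.1 - u z.2| / ‖z.1 - z.2‖ ^ ε) ''
    ((B ×ˢ B) ∩ {z | z.1 ≠ z.2}))

/-- The sup norm `‖u‖_{C(B)}`. -/
def cNorm {n : ℕ} (B : Set (Rn n)) (u : Rn n → ℝ) : ℝ := sSup ((fun x => |u x|) '' B)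

/-- The Hölder norm `‖u‖_{C^ε(B)}`. -/
def holderNorm {n : ℕ} (ε : ℝ) (B : Set (Rn n)) (u : Rn n → ℝ) : ℝ :=
  cNorm B u + holderSemi ε B u

/-- `u` is locally `ε`-Hölder continuous in `Ω`. -/
def LocallyHolder {n : ℕ} (ε : ℝ) (Ω : Set (Rn n)) (u : Rn n → ℝ) : Prop :=
  ∀ (x₀ : Rn n) (r : ℝ), closure (Metric.ball x₀ r) ⊆ Ω →
    ∃ L : ℝ, ∀ x ∈ Metric.ball x₀ r, ∀ y ∈ Metric.ball x₀ r, |u x - u y| ≤ L * ‖x - y‖ ^ ε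

end NLS

open NLS

/-!
Test the supersolution inequality with `φ = ηᵖ (u₊ + b)^(1-p)`, where `η` is a cutoff equal to `1`
on `B_r` and supported in `B_{3r/2}`. On `B_r × B_r`, `H_p(u(x) - u(y)) (φ(x) - φ(y))` is at most a
negative multiple of `|log (u(x) + b) - log (u(y) + b)|ᵖ`, and on the rest of `B_R × B_R` at most a
multiple of `|η(x) - η(y)|ᵖ`. The test inequality therefore bounds the Gagliardo energy of
`log (u + b)` on `B_r × B_r`: the cutoff contributes `r^(n-ps)`, and the points where `u < 0`, which
all lie outside `B_R`, contribute the tail of `u₋`. Since `V φ u^(p-1) ≤ V₊` on `B_{3r/2}`, the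
potential contributes at most `‖V₊‖_{L^1(B_{3r/2})}`, which Hölder's inequality and `q > n / (ps)`
bound by `‖V₊‖_{L^q}` times a constant multiple of `r^(n-ps)`. The fractional Poincaré inequality on
`B_r` turns the energy bound into the oscillation estimate, and Jensen's inequality gives the `L^1`
form.
-/

lemma Hp_of_nonneg {p t : ℝ} (hp : p ≠ 1) (ht : 0 ≤ t) : Hp p t = t ^ (p - 1) := by
  have hne : p - 2 + 1 ≠ 0 := fun h => hp (by linarith)
  rw [Hp, abs_of_nonneg ht, ← rpow_add_one' ht hne]
  ring_nf

lemma Hp_neg (p t : ℝ) : Hp p (-t) = -Hp p t := by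
  rw [Hp, Hp, abs_neg, mul_neg]

lemma Hp_nonpos {p t : ℝ} (ht : t ≤ 0) : Hp p t ≤ 0 :=
  mul_nonpos_of_nonneg_of_nonpos (by positivity) ht

lemma abs_Hp {p : ℝ} (hp : p ≠ 1) (t : ℝ) : |Hp p t| = |t| ^ (p - 1) := by
  rw [← Hp_of_nonneg hp (abs_nonneg t), Hp, Hp, abs_abs, abs_mul, abs_of_nonneg (by positivity)]

lemma rpow_sub_one_mul_self {p x : ℝ} (hp : p ≠ 0) (hx : 0 ≤ x) : x ^ (p - 1) * x = x ^ p := by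
  rw [← rpow_add_one' hx (by simpa using hp), sub_add_cancel]

lemma rpow_sub_one_mul_rpow_one_sub (p : ℝ) {x : ℝ} (hx : 0 < x) :
    x ^ (p - 1) * x ^ (1 - p) = 1 := by
  rw [← rpow_add hx, sub_add_sub_cancel, sub_self, Real.rpow_zero]

lemma rpow_sub_one_mul_add_rpow_one_sub_le_one {p b x : ℝ} (hp : 1 ≤ p) (hb : 0 < b)
    (hx : 0 ≤ x) : x ^ (p - 1) * (x + b) ^ (1 - p) ≤ 1 := by
  calc x ^ (p - 1) * (x + b) ^ (1 - p) ≤ (x + b) ^ (p - 1) * (x + b) ^ (1 - p) := by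
        gcongr
        linarith
    _ = 1 := rpow_sub_one_mul_rpow_one_sub p (by positivity)

lemma add_rpow_le_two_rpow_mul {p x y : ℝ} (hp : 0 ≤ p) (hx : 0 ≤ x) (hy : 0 ≤ y) :
    (x + y) ^ p ≤ 2 ^ p * (x ^ p + y ^ p) := by
  wlog hxy : y ≤ x generalizing x y
  · simpa only [add_comm] using this hy hx (le_of_not_ge hxy)
  calc (x + y) ^ p ≤ (2 * x) ^ p := by
        rw [two_mul]
        gcongr
    _ = 2 ^ p * x ^ p := mul_rpow zero_le_two hx
    _ ≤ 2 ^ p * (x ^ p + y ^ p) := by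
        have : 0 ≤ y ^ p := by positivity
        gcongr
        linarith

lemma rpow_sub_one_mul_le_add {p x y : ℝ} (hp : 1 ≤ p) (hx : 0 ≤ x) (hy : 0 ≤ y) :
    x ^ (p - 1) * y ≤ x ^ p + y ^ p := by
  have hp0 : p ≠ 0 := by positivity
  rcases le_total x y with hxy | hxy
  · calc x ^ (p - 1) * y ≤ y ^ (p - 1) * y := by gcongr
      _ = y ^ p := rpow_sub_one_mul_self hp0 hy
      _ ≤ x ^ p + y ^ p := le_add_of_nonneg_left (by positivity)
  · calc x ^ (p - 1) * y ≤ x ^ (p - 1) * x := by gcongr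
      _ = x ^ p := rpow_sub_one_mul_self hp0 hx
      _ ≤ x ^ p + y ^ p := le_add_of_nonneg_right (by positivity)

lemma le_one_add_rpow {p x : ℝ} (hp : 1 ≤ p) (hx : 0 ≤ x) : x ≤ 1 + x ^ p := by
  rcases le_total x 1 with h | h
  · exact h.trans (le_add_of_nonneg_right (by positivity))
  · exact (self_le_rpow_of_one_le h hp).trans (le_add_of_nonneg_left zero_le_one)

lemma abs_rpow_sub_rpow_le {p x y : ℝ} (hp : 1 ≤ p) (hx : x ∈ Icc (0 : ℝ) 1)
    (hy : y ∈ Icc (0 : ℝ) 1) : |x ^ p - y ^ p| ≤ p * |x - y| := by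
  refine (convex_Icc (0 : ℝ) 1).norm_image_sub_le_of_norm_hasDerivWithin_le
    (fun t _ => (hasDerivAt_rpow_const (Or.inr hp)).hasDerivWithinAt) (fun t ht => ?_) hy hx
  rw [norm_of_nonneg (mul_nonneg (by positivity) (rpow_nonneg ht.1 _))]
  exact mul_le_of_le_one_right (by positivity) (rpow_le_one ht.1 ht.2 (by linarith))

lemma abs_rpow_one_sub_sub_le {p b x y : ℝ} (hp : 1 ≤ p) (hb : 0 < b) (hx : b ≤ x) (hy : b ≤ y) :
    |x ^ (1 - p) - y ^ (1 - p)| ≤ (p - 1) * b ^ (-p) * |x - y| := by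
  refine (convex_Ici b).norm_image_sub_le_of_norm_hasDerivWithin_le
    (fun t ht => (hasDerivAt_rpow_const (Or.inl (hb.trans_le ht).ne')).hasDerivWithinAt)
    (fun t ht => ?_) hy hx
  have ht0 : 0 < t := hb.trans_le ht
  rw [norm_mul, norm_of_nonneg (rpow_nonneg ht0.le _), norm_eq_abs, abs_sub_comm,
    abs_of_nonneg (by linarith), sub_sub_cancel_left]
  exact mul_le_mul_of_nonneg_left (rpow_le_rpow_of_nonpos hb ht (by linarith)) (by linarith)

lemma abs_log_sub_log_le {b x y : ℝ} (hb : 0 < b) (hx : b ≤ x) (hy : b ≤ y) :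
    |log x - log y| ≤ b⁻¹ * |x - y| := by
  refine (convex_Ici b).norm_image_sub_le_of_norm_hasDerivWithin_le
    (fun t ht => (hasDerivAt_log (hb.trans_le ht).ne').hasDerivWithinAt) (fun t ht => ?_) hy hx
  rw [norm_of_nonneg (inv_nonneg.2 (hb.le.trans ht))]
  exact inv_anti₀ hb ht

lemma one_sub_rpow_le {p t : ℝ} (hp : 1 ≤ p) (ht : 0 ≤ t) : 1 - t ^ p ≤ p * (1 - t) := by
  have := one_add_mul_self_le_rpow_one_add (s := t - 1) (by linarith) hp
  rw [add_sub_cancel] at this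
  linarith

lemma le_exp_half_sub_exp_neg_half {t : ℝ} (ht : 0 ≤ t) : t ≤ exp (t / 2) - exp (-(t / 2)) := by
  have := self_le_sinh_iff.2 (show 0 ≤ t / 2 by positivity)
  rw [sinh_eq] at this
  linarith

lemma mul_rpow_le_exp_sub_one_rpow_mul {p L : ℝ} (hp : 1 ≤ p) (hL : 0 ≤ L) :
    (p - 1) * L ^ p ≤ (exp L - 1) ^ (p - 1) * (1 - exp (-((p - 1) * L))) := by
  have : 0 ≤ p - 1 := by linarith
  set m := (p - 1) * L
  have hm : m ≤ exp (m / 2) - exp (-(m / 2)) := le_exp_half_sub_exp_neg_half (by positivity)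
  have hexp : L * exp (L / 2) ≤ exp L - 1 := by
    have := mul_le_mul_of_nonneg_right (le_exp_half_sub_exp_neg_half hL) (exp_pos (L / 2)).le
    rwa [sub_mul, ← exp_add, ← exp_add, add_halves, neg_add_cancel, exp_zero] at this
  have hm0 : 0 ≤ 1 - exp (-m) := by
    rw [sub_nonneg, exp_le_one_iff, neg_nonpos]
    positivity
  calc (p - 1) * L ^ p = L ^ (p - 1) * m := by
        rw [← rpow_sub_one_mul_self (by positivity) hL]; ring
    _ ≤ L ^ (p - 1) * (exp (m / 2) - exp (-(m / 2))) := by gcongr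
    _ = L ^ (p - 1) * (exp (L / 2 * (p - 1)) * (1 - exp (-m))) := by
        rw [mul_sub (exp _), ← exp_add]; simp only [m]; ring_nf
    _ = (L * exp (L / 2)) ^ (p - 1) * (1 - exp (-m)) := by
        rw [mul_rpow hL (exp_pos _).le, ← exp_mul, mul_assoc]
    _ ≤ (exp L - 1) ^ (p - 1) * (1 - exp (-m)) := by gcongr

lemma Hp_sub_mul_rpow_sub_rpow_le {p x y : ℝ} (hp : 1 < p) (hx : 0 < x) (hy : 0 < y) :
    Hp p (x - y) * (x ^ (1 - p) - y ^ (1 - p)) ≤ -((p - 1) * |log x - log y| ^ p) := by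
  wlog hyx : y ≤ x generalizing x y
  · have := this hy hx (le_of_not_ge hyx)
    rw [abs_sub_comm, ← neg_sub y x, Hp_neg]
    linarith
  set L := log x - log y with hL
  have hL0 : 0 ≤ L := sub_nonneg.2 (log_le_log hy hyx)
  have hxL : x = y * exp L := by rw [hL, exp_sub, exp_log hx, exp_log hy]; field_simp
  have hpow : x ^ (1 - p) = y ^ (1 - p) * exp (-((p - 1) * L)) := by
    rw [hxL, mul_rpow hy.le (exp_pos _).le, ← exp_mul]; ring_nf
  have hexp : 0 ≤ exp L - 1 := sub_nonneg.2 (one_le_exp hL0)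
  calc Hp p (x - y) * (x ^ (1 - p) - y ^ (1 - p))
      = (y * (exp L - 1)) ^ (p - 1) * (y ^ (1 - p) * exp (-((p - 1) * L)) - y ^ (1 - p)) := by
        rw [Hp_of_nonneg hp.ne' (sub_nonneg.2 hyx), hpow]; nth_rw 1 [hxL]; ring_nf
    _ = -(y ^ (p - 1) * y ^ (1 - p) *
          ((exp L - 1) ^ (p - 1) * (1 - exp (-((p - 1) * L))))) := by
        rw [mul_rpow hy.le hexp]; ring
    _ ≤ -((p - 1) * |L| ^ p) := by
        rw [rpow_sub_one_mul_rpow_one_sub p hy, one_mul, abs_of_nonneg hL0]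
        exact neg_le_neg (mul_rpow_le_exp_sub_one_rpow_mul hp.le hL0)

/-- The constant bounding, for a supersolution tested with `η ^ p * (u + b) ^ (1 - p)`, the
terms in which the cutoff `η` varies by the Gagliardo energy of `η`. -/
def cutoffConst (p : ℝ) : ℝ := p * (p / (p - 1)) ^ (p - 1)

lemma cutoffConst_pos {p : ℝ} (hp : 1 < p) : 0 < cutoffConst p := by
  have : 0 < p - 1 := by linarith
  unfold cutoffConst
  positivity

lemma rpow_div_sub_one_le {p σ θ : ℝ} (hp : 1 < p) (hσ : 0 ≤ σ) (hθ : 0 < θ)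
    (h : 0 < 1 - σ ^ p * θ ^ (1 - p)) : σ ^ (p / (p - 1)) ≤ θ := by
  have hp1 : 0 < p - 1 := by linarith
  have hle : σ ^ p ≤ θ ^ (p - 1) := by
    rw [← neg_sub p 1, rpow_neg hθ.le, ← div_eq_mul_inv, sub_pos, div_lt_one (by positivity)] at h
    exact h.le
  calc σ ^ (p / (p - 1)) = (σ ^ p) ^ (p - 1)⁻¹ := by rw [← rpow_mul hσ, div_eq_mul_inv]
    _ ≤ (θ ^ (p - 1)) ^ (p - 1)⁻¹ := by gcongr
    _ = θ := rpow_rpow_inv hθ.le hp1.ne'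

lemma one_sub_rpow_mul_one_sub_le {p σ θ : ℝ} (hp : 1 < p) (hσ : 0 ≤ σ) (hθ0 : 0 < θ)
    (hθ1 : θ ≤ 1) :
    (1 - θ) ^ (p - 1) * (1 - σ ^ p * θ ^ (1 - p)) ≤ cutoffConst p * |1 - σ| ^ p := by
  have hp1 : 0 < p - 1 := by linarith
  have hC := cutoffConst_pos hp
  have : 0 ≤ 1 - θ := by linarith
  rcases le_or_gt (1 - σ ^ p * θ ^ (1 - p)) 0 with hneg | hpos
  · exact (mul_nonpos_of_nonneg_of_nonpos (by positivity) hneg).trans (by positivity)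
  have hσθ := rpow_div_sub_one_le hp hσ hθ0 hpos
  have hσ1 : 0 ≤ 1 - σ := by
    by_contra! h
    linarith [one_lt_rpow (show 1 < σ by linarith) (show 0 < p / (p - 1) by positivity)]
  have h1 : 1 - θ ≤ p / (p - 1) * (1 - σ) :=
    (sub_le_sub_left hσθ 1).trans
      (one_sub_rpow_le ((one_le_div hp1).2 (by linarith)) hσ)
  have h2 : 1 - σ ^ p * θ ^ (1 - p) ≤ p * (1 - σ) := by
    refine le_trans ?_ (one_sub_rpow_le hp.le hσ)
    exact sub_le_sub_left (le_mul_of_one_le_right (by positivity)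
      (one_le_rpow_of_pos_of_le_one_of_nonpos hθ0 hθ1 (by linarith))) 1
  calc (1 - θ) ^ (p - 1) * (1 - σ ^ p * θ ^ (1 - p))
      ≤ (p / (p - 1) * (1 - σ)) ^ (p - 1) * (p * (1 - σ)) := by gcongr
    _ = cutoffConst p * ((1 - σ) ^ (p - 1) * (1 - σ)) := by
        rw [mul_rpow (by positivity) hσ1, cutoffConst]; ring
    _ = cutoffConst p * |1 - σ| ^ p := by
        rw [rpow_sub_one_mul_self (by positivity) hσ1, abs_of_nonneg hσ1]

lemma Hp_sub_mul_cutoff_sub_le {p A B X Y : ℝ} (hp : 1 < p) (hA : 0 < A) (hB : 0 < B)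
    (hX : 0 ≤ X) (hY : 0 ≤ Y) :
    Hp p (A - B) * (X ^ p * A ^ (1 - p) - Y ^ p * B ^ (1 - p)) ≤
      cutoffConst p * |X - Y| ^ p := by
  wlog hAB : B ≤ A generalizing A B X Y
  · have := this hB hA hY hX (le_of_not_ge hAB)
    rw [abs_sub_comm, ← neg_sub B A, Hp_neg]
    linarith
  have hC := cutoffConst_pos hp
  have hAB0 : 0 ≤ A - B := sub_nonneg.2 hAB
  rw [Hp_of_nonneg hp.ne' hAB0]
  rcases hX.eq_or_lt with rfl | hX0
  · rw [zero_rpow (by positivity), zero_mul, zero_sub, mul_neg]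
    exact (neg_nonpos.2 (by positivity)).trans (by positivity)
  have hθ0 : 0 ≤ 1 - B / A := sub_nonneg.2 ((div_le_one hA).2 hAB)
  have hY' : Y = X * (Y / X) := by field_simp
  have hB' : B = A * (B / A) := by field_simp
  calc (A - B) ^ (p - 1) * (X ^ p * A ^ (1 - p) - Y ^ p * B ^ (1 - p))
      = A ^ (p - 1) * A ^ (1 - p) * (X ^ p *
          ((1 - B / A) ^ (p - 1) * (1 - (Y / X) ^ p * (B / A) ^ (1 - p)))) := by
        have h1 : (A - B) ^ (p - 1) = A ^ (p - 1) * (1 - B / A) ^ (p - 1) := by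
          rw [← mul_rpow hA.le hθ0, mul_sub, mul_one, ← hB']
        have h2 : Y ^ p = X ^ p * (Y / X) ^ p := by
          rw [← mul_rpow hX (by positivity), ← hY']
        have h3 : B ^ (1 - p) = A ^ (1 - p) * (B / A) ^ (1 - p) := by
          rw [← mul_rpow hA.le (by positivity), ← hB']
        rw [h1, h2, h3]
        ring
    _ ≤ X ^ p * (cutoffConst p * |1 - Y / X| ^ p) := by
        rw [rpow_sub_one_mul_rpow_one_sub p hA, one_mul]
        exact mul_le_mul_of_nonneg_left (one_sub_rpow_mul_one_sub_le hp (by positivity)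
          (by positivity) ((div_le_one hA).2 hAB)) (by positivity)
    _ = cutoffConst p * |X - Y| ^ p := by
        rw [mul_left_comm, ← mul_rpow hX (abs_nonneg _)]
        nth_rw 1 [← abs_of_pos hX0]
        rw [← abs_mul, mul_sub, mul_one, ← hY']

lemma Hp_sub_mul_add_rpow_le {p b U W : ℝ} (hp : 1 < p) (hb : 0 < b) (hU : 0 ≤ U) :
    Hp p (U - W) * (U + b) ^ (1 - p) ≤
      2 ^ (p - 1) * (1 + b ^ (1 - p) * max (-W) 0 ^ (p - 1)) := by
  have hp1 : 0 ≤ p - 1 := by linarith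
  set m := max (-W) 0
  have hm0 : 0 ≤ m := le_max_right _ _
  have hWm : -W ≤ m := le_max_left _ _
  rcases le_total (U - W) 0 with h | h
  · exact (mul_nonpos_of_nonpos_of_nonneg (Hp_nonpos h) (by positivity)).trans (by positivity)
  rw [Hp_of_nonneg hp.ne' h]
  calc (U - W) ^ (p - 1) * (U + b) ^ (1 - p)
      ≤ (U + m) ^ (p - 1) * (U + b) ^ (1 - p) := by gcongr; linarith
    _ ≤ 2 ^ (p - 1) * (U ^ (p - 1) + m ^ (p - 1)) * (U + b) ^ (1 - p) := by
        gcongr; exact add_rpow_le_two_rpow_mul hp1 hU hm0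
    _ = 2 ^ (p - 1) * (U ^ (p - 1) * (U + b) ^ (1 - p) + (U + b) ^ (1 - p) * m ^ (p - 1)) := by
        ring
    _ ≤ 2 ^ (p - 1) * (1 + b ^ (1 - p) * m ^ (p - 1)) := by
        have hUb : (U + b) ^ (1 - p) ≤ b ^ (1 - p) :=
          rpow_le_rpow_of_nonpos hb (by linarith) (by linarith)
        gcongr
        exact rpow_sub_one_mul_add_rpow_one_sub_le_one hp.le hb hU

lemma cnps_pos {n : ℕ} {p s : ℝ} (hp : 0 < p) (hs1 : s < 1) : 0 < cnps n p s := by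
  have : 0 < Gamma (((n : ℝ) + p) / 2) := Gamma_pos_of_pos (by positivity)
  have : 0 < Gamma ((p + 1) / 2) := Gamma_pos_of_pos (by positivity)
  have : 0 < 1 - s := by linarith
  unfold cnps
  positivity

lemma gagliardoIntegrand_nonneg {n : ℕ} {p s : ℝ} (u : Rn n → ℝ) (z : Rn n × Rn n) :
    0 ≤ gagliardoIntegrand n p s u z := by
  unfold gagliardoIntegrand
  positivity

lemma measurable_gagliardoIntegrand {n : ℕ} {p s : ℝ} {u : Rn n → ℝ} (hu : Measurable u) :
    Measurable (gagliardoIntegrand n p s u) := by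
  unfold gagliardoIntegrand
  fun_prop

section Cutoff

variable {E : Type*} [PseudoMetricSpace E]

/-- The cutoff equal to `1` on `B_r(x₀)`, to `0` off `B_{3r/2}(x₀)`, and affine in the distance
to `x₀` in between. -/
def cutoff (x₀ : E) (r : ℝ) (x : E) : ℝ := max 0 (min 1 (3 - 2 * (dist x x₀ / r)))

lemma cutoff_mem_Icc (x₀ : E) (r : ℝ) (x : E) : cutoff x₀ r x ∈ Icc (0 : ℝ) 1 :=
  ⟨le_max_left _ _, max_le zero_le_one (min_le_left _ _)⟩

lemma cutoff_nonneg (x₀ : E) (r : ℝ) (x : E) : 0 ≤ cutoff x₀ r x := (cutoff_mem_Icc x₀ r x).1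

lemma cutoff_rpow_le_one {p : ℝ} (hp : 0 ≤ p) (x₀ : E) (r : ℝ) (x : E) :
    cutoff x₀ r x ^ p ≤ 1 :=
  rpow_le_one (cutoff_nonneg x₀ r x) (cutoff_mem_Icc x₀ r x).2 hp

lemma cutoff_eq_one {x₀ x : E} {r : ℝ} (hr : 0 < r) (hx : x ∈ ball x₀ r) :
    cutoff x₀ r x = 1 := by
  have : dist x x₀ / r < 1 := (div_lt_one hr).2 hx
  rw [cutoff, min_eq_left (by linarith), max_eq_right zero_le_one]

lemma cutoff_eq_zero {x₀ x : E} {r : ℝ} (hr : 0 < r) (hx : x ∉ ball x₀ (3 / 2 * r)) :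
    cutoff x₀ r x = 0 := by
  have : 3 / 2 ≤ dist x x₀ / r := (le_div_iff₀ hr).2 (not_lt.1 hx)
  exact max_eq_left ((min_le_right _ _).trans (by linarith))

lemma continuous_cutoff (x₀ : E) (r : ℝ) : Continuous (cutoff x₀ r) := by
  unfold cutoff
  fun_prop

lemma abs_cutoff_sub_cutoff_le {x₀ : E} {r : ℝ} (hr : 0 ≤ r) (x y : E) :
    |cutoff x₀ r x - cutoff x₀ r y| ≤ min (2 * (dist x y / r)) 1 := by
  refine le_min ?_ ?_
  · calc |cutoff x₀ r x - cutoff x₀ r y|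
        ≤ |min 1 (3 - 2 * (dist x x₀ / r)) - min 1 (3 - 2 * (dist y x₀ / r))| := by
          simpa only [cutoff, max_comm (0 : ℝ)] using abs_max_sub_max_le_abs _ _ 0
      _ ≤ |(3 - 2 * (dist x x₀ / r)) - (3 - 2 * (dist y x₀ / r))| := by
          simpa only [min_comm (1 : ℝ)] using abs_inf_sub_inf_le_abs _ _ 1
      _ = |-(2 * ((dist x x₀ - dist y x₀) / r))| := by ring_nf
      _ = 2 * (|dist x x₀ - dist y x₀| / r) := by
          rw [abs_neg, abs_mul, abs_div, abs_two, abs_of_nonneg hr]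
      _ ≤ 2 * (dist x y / r) := by
          gcongr
          exact abs_dist_sub_le x y x₀
  · have hx := cutoff_mem_Icc x₀ r x
    have hy := cutoff_mem_Icc x₀ r y
    rw [abs_le]
    constructor <;> linarith [hx.1, hx.2, hy.1, hy.2]

end Cutoff

section TruncatedKernel

lemma integrableOn_min_rpow_mul_rpow {p a : ℝ} (ha : 0 < a) (hap : a < p) :
    IntegrableOn (fun t : ℝ => min (2 * t) 1 ^ p * t ^ (-1 - a)) (Ioi 0) := by
  have hmeas : Measurable fun t : ℝ => min (2 * t) 1 ^ p * t ^ (-1 - a) := by fun_prop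
  have hp : 0 < p := ha.trans hap
  rw [← Ioc_union_Ioi_eq_Ioi zero_le_one]
  refine IntegrableOn.union ?_ ?_
  · have hint : IntegrableOn (fun t : ℝ => 2 ^ p * t ^ (p - 1 - a)) (Ioc 0 1) := by
      refine Integrable.const_mul ?_ _
      exact (intervalIntegrable_iff_integrableOn_Ioc_of_le zero_le_one).1
        (intervalIntegral.intervalIntegrable_rpow' (by linarith))
    refine hint.mono' hmeas.aestronglyMeasurable ?_
    filter_upwards [ae_restrict_mem measurableSet_Ioc] with t ⟨ht, _⟩
    rw [norm_of_nonneg (by positivity)]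
    calc min (2 * t) 1 ^ p * t ^ (-1 - a) ≤ (2 * t) ^ p * t ^ (-1 - a) := by
          gcongr
          exact min_le_left _ _
      _ = 2 ^ p * t ^ (p - 1 - a) := by
          rw [mul_rpow zero_le_two ht.le, mul_assoc, ← rpow_add ht]
          ring_nf
  · have hint : IntegrableOn (fun t : ℝ => t ^ (-1 - a)) (Ioi 1) :=
      integrableOn_Ioi_rpow_of_lt (by linarith) zero_lt_one
    refine hint.mono' hmeas.aestronglyMeasurable ?_
    filter_upwards [ae_restrict_mem measurableSet_Ioi] with t ht
    have ht0 : 0 < t := zero_lt_one.trans ht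
    rw [norm_of_nonneg (by positivity)]
    exact mul_le_of_le_one_left (by positivity)
      (rpow_le_one (by positivity) (min_le_right _ _) hp.le)

variable (n : ℕ) (p s r : ℝ)

/-- The kernel `|z|^{-n-ps}` damped at the origin by the factor `min(2|z|/r, 1)^p`, which bounds
the increments of `cutoff x₀ r`. -/
def truncatedKernel (z : Rn n) : ℝ := min (2 * (‖z‖ / r)) 1 ^ p * ‖z‖ ^ (-(n : ℝ) - p * s)

/-- The total mass of the truncated kernel at scale `r = 1`. -/
def truncatedKernelMass : ℝ := ∫ z, truncatedKernel n p s 1 z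

variable {n p s r}

lemma truncatedKernel_nonneg (hr : 0 ≤ r) (z : Rn n) : 0 ≤ truncatedKernel n p s r z := by
  unfold truncatedKernel
  positivity

lemma truncatedKernelMass_nonneg : 0 ≤ truncatedKernelMass n p s :=
  integral_nonneg (truncatedKernel_nonneg zero_le_one)

lemma truncatedKernel_sub_comm (x y : Rn n) :
    truncatedKernel n p s r (x - y) = truncatedKernel n p s r (y - x) := by
  rw [truncatedKernel, truncatedKernel, norm_sub_rev]

lemma integrable_truncatedKernel_one (hn : 1 ≤ n) (hp : 0 < p) (hs0 : 0 < s) (hs1 : s < 1) :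
    Integrable (truncatedKernel n p s 1) := by
  have : Nonempty (Fin n) := ⟨⟨0, hn⟩⟩
  have hradial := integrable_fun_norm_addHaar (E := Rn n) volume
    (f := fun t : ℝ => min (2 * (t / 1)) 1 ^ p * t ^ (-(n : ℝ) - p * s))
  refine hradial.2 (IntegrableOn.congr_fun (integrableOn_min_rpow_mul_rpow (p := p) (a := p * s)
    (by positivity) (by nlinarith)) (fun t (ht : 0 < t) => ?_) measurableSet_Ioi)
  have hpow : t ^ (-1 - p * s) = t ^ (n - 1) * t ^ (-(n : ℝ) - p * s) := by
    rw [← Real.rpow_natCast, ← rpow_add ht]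
    push_cast [hn]
    ring_nf
  simp only [finrank_euclideanSpace_fin, smul_eq_mul, div_one, hpow]
  ring

lemma truncatedKernel_eq_smul (hr : 0 < r) (z : Rn n) :
    truncatedKernel n p s r z =
      r ^ (-(n : ℝ) - p * s) * truncatedKernel n p s 1 (r⁻¹ • z) := by
  have hr' : r ^ (-(n : ℝ) - p * s) ≠ 0 := by positivity
  rw [truncatedKernel, truncatedKernel, div_one, norm_smul, norm_of_nonneg (by positivity),
    mul_rpow (by positivity) (by positivity), inv_rpow hr.le, inv_mul_eq_div]
  field_simp

lemma integrable_truncatedKernel (hn : 1 ≤ n) (hp : 0 < p) (hs0 : 0 < s) (hs1 : s < 1)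
    (hr : 0 < r) : Integrable (truncatedKernel n p s r) := by
  rw [funext (truncatedKernel_eq_smul hr)]
  exact ((integrable_truncatedKernel_one hn hp hs0 hs1).comp_smul
    (inv_ne_zero hr.ne')).const_mul _

lemma integral_truncatedKernel (hr : 0 < r) :
    ∫ z, truncatedKernel n p s r z = r ^ (-(p * s)) * truncatedKernelMass n p s := by
  rw [funext (truncatedKernel_eq_smul hr), integral_const_mul,
    Measure.integral_comp_inv_smul_of_nonneg _ _ hr.le, smul_eq_mul, ← mul_assoc,
    finrank_euclideanSpace_fin, ← Real.rpow_natCast, ← rpow_add hr, truncatedKernelMass]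
  ring_nf

end TruncatedKernel

section ProductIntegrals

lemma integral_add_swap {α : Type*} [MeasurableSpace α] {μ : Measure α} [SFinite μ]
    {f : α × α → ℝ} (hf : Integrable f (μ.prod μ)) :
    ∫ z, (f z + f z.swap) ∂μ.prod μ = 2 * ∫ z, f z ∂μ.prod μ := by
  rw [two_mul]
  nth_rw 3 [← integral_prod_swap]
  exact integral_add hf hf.swap

variable {G : Type*} [AddGroup G] [MeasurableSpace G] [MeasurableAdd₂ G] [MeasurableNeg G]
  {μ : Measure G} [SFinite μ] [μ.IsAddRightInvariant] {f g : G → ℝ}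

lemma integrable_mul_comp_sub (hf : Integrable f μ) (hg : Integrable g μ) :
    Integrable (fun z : G × G => f z.2 * g (z.1 - z.2)) (μ.prod μ) := by
  simpa using hf.convolution_integrand (ContinuousLinearMap.mul ℝ ℝ) hg

lemma integral_mul_comp_sub (hf : Integrable f μ) (hg : Integrable g μ) :
    ∫ z : G × G, f z.2 * g (z.1 - z.2) ∂μ.prod μ = (∫ x, f x ∂μ) * ∫ x, g x ∂μ := by
  rw [integral_prod_symm _ (integrable_mul_comp_sub hf hg)]
  simp only [integral_const_mul, integral_sub_right_eq_self, integral_mul_const]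

end ProductIntegrals

section CutoffEnergy

variable {n : ℕ} {p s r : ℝ}

lemma gagliardoIntegrand_cutoff_le (hp : 0 < p) (hr : 0 < r) (x₀ : Rn n) (z : Rn n × Rn n) :
    gagliardoIntegrand n p s (cutoff x₀ r) z ≤
      (ball x₀ (3 / 2 * r)).indicator 1 z.2 * truncatedKernel n p s r (z.1 - z.2) +
        (ball x₀ (3 / 2 * r)).indicator 1 z.1 * truncatedKernel n p s r (z.2 - z.1) := by
  set χ : Rn n → ℝ := (ball x₀ (3 / 2 * r)).indicator 1
  have hk := truncatedKernel_nonneg (p := p) (s := s) hr.le (z.1 - z.2)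
  have hχ (x) : 0 ≤ χ x := indicator_nonneg (fun _ _ => zero_le_one) x
  rw [truncatedKernel_sub_comm z.2, ← add_mul]
  by_cases h : z.1 ∈ ball x₀ (3 / 2 * r) ∨ z.2 ∈ ball x₀ (3 / 2 * r)
  · have hχ1 : 1 ≤ χ z.2 + χ z.1 := by
      rcases h with h | h
      · linarith [hχ z.2, show χ z.1 = 1 from indicator_of_mem h _]
      · linarith [hχ z.1, show χ z.2 = 1 from indicator_of_mem h _]
    refine le_trans ?_ (le_mul_of_one_le_left hk hχ1)
    rw [gagliardoIntegrand, truncatedKernel, ← dist_eq_norm]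
    gcongr
    exact abs_cutoff_sub_cutoff_le hr.le _ _
  · push Not at h
    rw [gagliardoIntegrand, cutoff_eq_zero hr h.1, cutoff_eq_zero hr h.2, sub_self, abs_zero,
      zero_rpow hp.ne', zero_mul]
    exact mul_nonneg (add_nonneg (hχ _) (hχ _)) hk

lemma integrable_indicator_mul_truncatedKernel (hn : 1 ≤ n) (hp : 0 < p) (hs0 : 0 < s)
    (hs1 : s < 1) (hr : 0 < r) (x₀ : Rn n) :
    Integrable fun z : Rn n × Rn n =>
      (ball x₀ (3 / 2 * r)).indicator 1 z.2 * truncatedKernel n p s r (z.1 - z.2) :=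
  integrable_mul_comp_sub
    ((integrable_indicator_iff measurableSet_ball).2 (integrableOn_const measure_ball_lt_top.ne))
    (integrable_truncatedKernel hn hp hs0 hs1 hr)

lemma integrable_gagliardoIntegrand_cutoff (hn : 1 ≤ n) (hp : 0 < p) (hs0 : 0 < s) (hs1 : s < 1)
    (hr : 0 < r) (x₀ : Rn n) : Integrable (gagliardoIntegrand n p s (cutoff x₀ r)) := by
  have hmaj := integrable_indicator_mul_truncatedKernel hn hp hs0 hs1 hr x₀
  refine (hmaj.add hmaj.swap).mono'
    (measurable_gagliardoIntegrand (continuous_cutoff x₀ r).measurable).aestronglyMeasurable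
    (.of_forall fun z => ?_)
  rw [norm_of_nonneg (gagliardoIntegrand_nonneg _ _)]
  exact gagliardoIntegrand_cutoff_le hp hr x₀ z

lemma integral_gagliardoIntegrand_cutoff_le (hn : 1 ≤ n) (hp : 0 < p) (hs0 : 0 < s)
    (hs1 : s < 1) (hr : 0 < r) (x₀ : Rn n) :
    ∫ z, gagliardoIntegrand n p s (cutoff x₀ r) z ≤
      2 * (volume.real (ball x₀ (3 / 2 * r)) * (r ^ (-(p * s)) * truncatedKernelMass n p s)) := by
  have hmaj := integrable_indicator_mul_truncatedKernel hn hp hs0 hs1 hr x₀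
  have hχ : Integrable ((ball x₀ (3 / 2 * r)).indicator (1 : Rn n → ℝ)) :=
    (integrable_indicator_iff measurableSet_ball).2 (integrableOn_const measure_ball_lt_top.ne)
  refine (integral_mono (integrable_gagliardoIntegrand_cutoff hn hp hs0 hs1 hr x₀)
    (hmaj.add hmaj.swap) (gagliardoIntegrand_cutoff_le hp hr x₀)).trans_eq ?_
  have hswap := integral_add_swap hmaj
  have hprod := integral_mul_comp_sub hχ (integrable_truncatedKernel hn hp hs0 hs1 hr)
  rw [integral_indicator_one measurableSet_ball, integral_truncatedKernel hr] at hprod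
  rw [← hprod]
  exact hswap

end CutoffEnergy

section TestFunction

variable {E : Type*} [PseudoMetricSpace E] {p b r : ℝ} {x₀ x : E} {u : E → ℝ}

/-- The test function `η ^ p * (u₊ + b) ^ (1 - p)`, with `η` the cutoff of `B_r(x₀)`. The
positive part of `u` makes it nonnegative everywhere and changes nothing where `u ≥ 0`. -/
def logTestFunction (p b r : ℝ) (x₀ : E) (u : E → ℝ) (x : E) : ℝ :=
  cutoff x₀ r x ^ p * (max (u x) 0 + b) ^ (1 - p)

lemma logTestFunction_of_nonneg (hux : 0 ≤ u x) :
    logTestFunction p b r x₀ u x = cutoff x₀ r x ^ p * (u x + b) ^ (1 - p) := by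
  rw [logTestFunction, max_eq_left hux]

lemma logTestFunction_nonneg (hb : 0 < b) (x₀ : E) (u : E → ℝ) (x : E) :
    0 ≤ logTestFunction p b r x₀ u x := by
  have := cutoff_nonneg x₀ r x
  unfold logTestFunction
  positivity

lemma max_zero_add_rpow_one_sub_le {t : ℝ} (hp : 1 ≤ p) (hb : 0 < b) :
    (max t 0 + b) ^ (1 - p) ≤ b ^ (1 - p) :=
  rpow_le_rpow_of_nonpos hb (by linarith [le_max_right t 0]) (by linarith)

lemma logTestFunction_le (hp : 1 ≤ p) (hb : 0 < b) (x₀ : E) (u : E → ℝ) (x : E) :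
    logTestFunction p b r x₀ u x ≤ b ^ (1 - p) :=
  (mul_le_of_le_one_left (by positivity) (cutoff_rpow_le_one (by linarith) x₀ r x)).trans
    (max_zero_add_rpow_one_sub_le hp hb)

lemma logTestFunction_eq_zero (hp : 0 < p) (hr : 0 < r) (u : E → ℝ)
    (hx : x ∉ ball x₀ (3 / 2 * r)) : logTestFunction p b r x₀ u x = 0 := by
  rw [logTestFunction, cutoff_eq_zero hr hx, zero_rpow hp.ne', zero_mul]

lemma measurable_logTestFunction [MeasurableSpace E] [OpensMeasurableSpace E]
    (hu : Measurable u) : Measurable (logTestFunction p b r x₀ u) := by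
  have := (continuous_cutoff x₀ r).measurable
  unfold logTestFunction
  fun_prop

lemma abs_logTestFunction_sub_le (hp : 1 ≤ p) (hb : 0 < b) (x₀ : E) (u : E → ℝ) (x y : E) :
    |logTestFunction p b r x₀ u x - logTestFunction p b r x₀ u y| ≤
      p * b ^ (1 - p) * |cutoff x₀ r x - cutoff x₀ r y| +
        (p - 1) * b ^ (-p) * |u x - u y| := by
  have : 0 ≤ p - 1 := by linarith
  set X := cutoff x₀ r x
  set Y := cutoff x₀ r y
  set A := max (u x) 0 + b
  set B := max (u y) 0 + b
  have hY : 0 ≤ Y ^ p := rpow_nonneg (cutoff_nonneg x₀ r y) p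
  have hA : 0 ≤ A ^ (1 - p) := by positivity
  have hAB : |A - B| ≤ |u x - u y| := by
    simpa only [A, B, add_sub_add_right_eq_sub] using abs_max_sub_max_le_abs (u x) (u y) 0
  calc |X ^ p * A ^ (1 - p) - Y ^ p * B ^ (1 - p)|
      = |(X ^ p - Y ^ p) * A ^ (1 - p) + Y ^ p * (A ^ (1 - p) - B ^ (1 - p))| := by ring_nf
    _ ≤ |X ^ p - Y ^ p| * A ^ (1 - p) + Y ^ p * |A ^ (1 - p) - B ^ (1 - p)| := by
        refine (abs_add_le _ _).trans_eq ?_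
        rw [abs_mul, abs_mul, abs_of_nonneg hA, abs_of_nonneg hY]
    _ ≤ p * |X - Y| * b ^ (1 - p) + 1 * ((p - 1) * b ^ (-p) * |A - B|) := by
        have hX := abs_rpow_sub_rpow_le hp (cutoff_mem_Icc x₀ r x) (cutoff_mem_Icc x₀ r y)
        have hYp : Y ^ p ≤ 1 := cutoff_rpow_le_one (by linarith) x₀ r y
        have hAb : A ^ (1 - p) ≤ b ^ (1 - p) := max_zero_add_rpow_one_sub_le hp hb
        have hABp := abs_rpow_one_sub_sub_le hp hb
          (le_add_of_nonneg_left (le_max_right (u x) 0))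
          (le_add_of_nonneg_left (le_max_right (u y) 0))
        exact add_le_add (mul_le_mul hX hAb hA (by positivity))
          (mul_le_mul hYp hABp (abs_nonneg _) zero_le_one)
    _ ≤ p * b ^ (1 - p) * |X - Y| + (p - 1) * b ^ (-p) * |u x - u y| := by
        rw [one_mul, mul_right_comm]
        gcongr

end TestFunction

section Integrability

variable {n : ℕ} {p s : ℝ} {Ω : Set (Rn n)}

lemma integrableOn_gagliardoIntegrand_of_abs_sub_le {α β : ℝ} {S : Set (Rn n × Rn n)}
    {φ η u : Rn n → ℝ} (hp : 0 ≤ p) (hα : 0 ≤ α) (hβ : 0 ≤ β) (hφ : Measurable φ)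
    (hη : IntegrableOn (gagliardoIntegrand n p s η) S)
    (hu : IntegrableOn (gagliardoIntegrand n p s u) S)
    (hle : ∀ᵐ z ∂volume.restrict S,
      |φ z.1 - φ z.2| ≤ α * |η z.1 - η z.2| + β * |u z.1 - u z.2|) :
    IntegrableOn (gagliardoIntegrand n p s φ) S := by
  refine ((hη.const_mul (2 ^ p * α ^ p)).add (hu.const_mul (2 ^ p * β ^ p))).mono'
    (measurable_gagliardoIntegrand hφ).aestronglyMeasurable ?_
  filter_upwards [hle] with z hz
  rw [norm_of_nonneg (gagliardoIntegrand_nonneg _ _), Pi.add_apply]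
  unfold gagliardoIntegrand
  calc |φ z.1 - φ z.2| ^ p * ‖z.1 - z.2‖ ^ (-(n : ℝ) - p * s)
      ≤ 2 ^ p * ((α * |η z.1 - η z.2|) ^ p + (β * |u z.1 - u z.2|) ^ p) *
          ‖z.1 - z.2‖ ^ (-(n : ℝ) - p * s) := by
        gcongr
        exact (rpow_le_rpow (abs_nonneg _) hz hp).trans
          (add_rpow_le_two_rpow_mul hp (by positivity) (by positivity))
    _ = _ := by
        rw [mul_rpow hα (abs_nonneg _), mul_rpow hβ (abs_nonneg _)]
        ring

lemma integrableOn_abs_rpow_mul {M : ℝ} {φ W : Rn n → ℝ} (hp : 0 ≤ p) (hφ : Measurable φ)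
    (hφM : ∀ x, |φ x| ≤ M) (hW : IntegrableOn W Ω) :
    IntegrableOn (fun x => |φ x| ^ p * W x) Ω := by
  refine hW.bdd_mul (c := M ^ p) (by fun_prop) (.of_forall fun x => ?_)
  rw [norm_of_nonneg (by positivity)]
  gcongr
  exact hφM x

lemma memY0_logTestFunction {b r : ℝ} {x₀ : Rn n} {u V : Rn n → ℝ} (hn : 1 ≤ n) (hp : 1 ≤ p)
    (hs0 : 0 < s) (hs1 : s < 1) (hb : 0 < b) (hr : 0 < r) (hΩ : Bornology.IsBounded Ω)
    (hu : MemX n p s Ω u) (hVplus : IntegrableOn (plusPart V) Ω)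
    (hVminus : IntegrableOn (minusPart V) Ω) (hsub : ball x₀ (3 / 2 * r) ⊆ Ω) :
    MemY0 n p s Ω V (logTestFunction p b r x₀ u) := by
  have hp0 : 0 < p := by linarith
  have hφ : Measurable (logTestFunction p b r x₀ u) := measurable_logTestFunction hu.1
  have hbound (x) : |logTestFunction p b r x₀ u x| ≤ b ^ (1 - p) := by
    rw [abs_of_nonneg (logTestFunction_nonneg hb _ _ _)]
    exact logTestFunction_le hp hb _ _ _
  have hLp : IntegrableOn (fun x => |logTestFunction p b r x₀ u x| ^ p) Ω := by
    simpa only [mul_one] using integrableOn_abs_rpow_mul hp0.le hφ hbound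
      (integrableOn_const (C := (1 : ℝ)) hΩ.measure_lt_top.ne)
  have hgag : IntegrableOn (gagliardoIntegrand n p s (logTestFunction p b r x₀ u)) (R2n n Ω) :=
    integrableOn_gagliardoIntegrand_of_abs_sub_le hp0.le (by positivity)
      (mul_nonneg (by linarith) (by positivity)) hφ
      (integrable_gagliardoIntegrand_cutoff hn hp0 hs0 hs1 hr x₀).integrableOn hu.2.2
      (.of_forall fun z => abs_logTestFunction_sub_le hp hb x₀ u z.1 z.2)
  exact ⟨⟨⟨hφ, hLp, hgag⟩,
      .of_forall fun x hx => logTestFunction_eq_zero hp0 hr u fun h => hx (hsub h)⟩,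
    integrableOn_abs_rpow_mul hp0.le hφ hbound hVplus,
    integrableOn_abs_rpow_mul hp0.le hφ hbound hVminus⟩

lemma kernel_nonneg {lam Lam : ℝ} {K : Rn n → ℝ} {y : Rn n} (hp : 0 < p) (hs1 : s < 1)
    (hlam : 0 ≤ lam) (hK : KernelClass n p s lam Lam K) (hy : y ≠ 0) : 0 ≤ K y := by
  have := cnps_pos (n := n) hp hs1
  exact le_trans (by positivity) (hK.2.2 y hy).1

lemma integrable_pairing {lam Lam : ℝ} {u φ K : Rn n → ℝ} (hp : 1 < p) (hs1 : s < 1)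
    (hlam : 0 ≤ lam) (hLam : 0 ≤ Lam) (hK : KernelClass n p s lam Lam K) (hu : MemX n p s Ω u)
    (hφ : MemX n p s Ω φ) (hφ0 : ∀ x ∉ Ω, φ x = 0) :
    Integrable fun z : Rn n × Rn n =>
      Hp p (u z.1 - u z.2) * (φ z.1 - φ z.2) * K (z.1 - z.2) := by
  have hc := cnps_pos (n := n) (zero_lt_one.trans hp) hs1
  have hum := hu.1
  have hφm := hφ.1
  have hKm := hK.1
  rw [← integrableOn_iff_integrable_of_support_subset (s := R2n n Ω)]
  swap
  · refine fun z hz => not_not.1 fun h => hz ?_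
    have h' : z.1 ∉ Ω ∧ z.2 ∉ Ω := by simpa [R2n] using h
    simp [hφ0 _ h'.1, hφ0 _ h'.2]
  have hmeas : Measurable fun z : Rn n × Rn n =>
      Hp p (u z.1 - u z.2) * (φ z.1 - φ z.2) * K (z.1 - z.2) := by
    unfold Hp
    fun_prop
  refine ((hu.2.2.add hφ.2.2).const_mul (cnps n p s * Lam)).mono' hmeas.aestronglyMeasurable
    (.of_forall fun z => ?_)
  have hsum : 0 ≤ gagliardoIntegrand n p s u z + gagliardoIntegrand n p s φ z :=
    add_nonneg (gagliardoIntegrand_nonneg _ _) (gagliardoIntegrand_nonneg _ _)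
  rw [Pi.add_apply]
  by_cases hz : z.1 = z.2
  · rw [hz, sub_self, sub_self, mul_zero, zero_mul, norm_zero]
    positivity
  have hz' := sub_ne_zero.2 hz
  rw [norm_eq_abs, abs_mul, abs_mul, abs_Hp hp.ne',
    abs_of_nonneg (kernel_nonneg (zero_lt_one.trans hp) hs1 hlam hK hz')]
  calc |u z.1 - u z.2| ^ (p - 1) * |φ z.1 - φ z.2| * K (z.1 - z.2)
      ≤ (|u z.1 - u z.2| ^ p + |φ z.1 - φ z.2| ^ p) *
          (cnps n p s * Lam * ‖z.1 - z.2‖ ^ (-(n : ℝ) - p * s)) :=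
        mul_le_mul (rpow_sub_one_mul_le_add hp.le (abs_nonneg _) (abs_nonneg _))
          (hK.2.2 _ hz').2 (kernel_nonneg (zero_lt_one.trans hp) hs1 hlam hK hz')
          (by positivity)
    _ = cnps n p s * Lam * (gagliardoIntegrand n p s u z + gagliardoIntegrand n p s φ z) := by
        unfold gagliardoIntegrand
        ring

end Integrability

section Tail

variable {n : ℕ} {p s R : ℝ} {x₀ : Rn n} {u : Rn n → ℝ}

/-- The integrand `|u(y)| ^ (p - 1) * |y - x₀| ^ (-n - p * s)` of the nonlocal tail. -/
def tailIntegrand (n : ℕ) (p s : ℝ) (u : Rn n → ℝ) (x₀ y : Rn n) : ℝ :=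
  |u y| ^ (p - 1) * ‖y - x₀‖ ^ (-(n : ℝ) - p * s)

lemma tailIntegrand_nonneg (u : Rn n → ℝ) (x₀ y : Rn n) : 0 ≤ tailIntegrand n p s u x₀ y := by
  unfold tailIntegrand
  positivity

lemma measurable_tailIntegrand (hu : Measurable u) : Measurable (tailIntegrand n p s u x₀) := by
  unfold tailIntegrand
  fun_prop

lemma sphereArea_pos (hn : 1 ≤ n) : 0 < sphereArea n :=
  mul_pos (by exact_mod_cast hn)
    (ENNReal.toReal_pos (measure_ball_pos _ _ one_pos).ne' measure_ball_lt_top.ne)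

lemma setIntegral_tailIntegrand (hn : 1 ≤ n) (hp : 1 < p) (hs0 : 0 < s) (hR : 0 < R)
    (u : Rn n → ℝ) (x₀ : Rn n) :
    ∫ y in (ball x₀ R)ᶜ, tailIntegrand n p s u x₀ y =
      sphereArea n / (p * s) * R ^ (-(p * s)) * tail n p s u x₀ R ^ (p - 1) := by
  have hS := sphereArea_pos hn
  have hT : 0 ≤ ∫ y in (ball x₀ R)ᶜ, tailIntegrand n p s u x₀ y :=
    integral_nonneg fun _ => tailIntegrand_nonneg _ _ _
  have htail : tail n p s u x₀ R = (p * s / sphereArea n * R ^ (p * s) *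
      ∫ y in (ball x₀ R)ᶜ, tailIntegrand n p s u x₀ y) ^ (1 / (p - 1)) := rfl
  have : 0 < R ^ (p * s) := by positivity
  rw [htail, ← rpow_mul (by positivity), one_div, inv_mul_cancel₀ (by linarith), Real.rpow_one,
    rpow_neg hR.le]
  field_simp

lemma rpow_neg_norm_le_mul {E : Type*} [SeminormedAddGroup E] {a c : ℝ} {x y : E} (ha : 0 ≤ a)
    (hc : 0 < c) (hx : 0 < ‖x‖) (h : ‖x‖ ≤ c * ‖y‖) : ‖y‖ ^ (-a) ≤ c ^ a * ‖x‖ ^ (-a) := by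
  have hcx : c⁻¹ * ‖x‖ ≤ ‖y‖ := (inv_mul_le_iff₀ hc).2 h
  calc ‖y‖ ^ (-a) ≤ (c⁻¹ * ‖x‖) ^ (-a) :=
        rpow_le_rpow_of_nonpos (by positivity) hcx (by linarith)
    _ = c ^ a * ‖x‖ ^ (-a) := by
        rw [mul_rpow (by positivity) (by positivity), inv_rpow hc.le, rpow_neg hc.le, inv_inv]

lemma truncatedKernel_eq_of_notMem_ball (hR : 0 < R) {y : Rn n} (hy : y ∉ ball x₀ R) :
    truncatedKernel n p s R (y - x₀) = ‖y - x₀‖ ^ (-(n : ℝ) - p * s) := by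
  have : 1 ≤ ‖y - x₀‖ / R := (one_le_div hR).2 (by simpa [dist_eq_norm] using hy)
  rw [truncatedKernel, min_eq_right (by linarith), Real.one_rpow, one_mul]

lemma tailIntegrand_le_add_gagliardoIntegrand (hp : 1 ≤ p) (hs0 : 0 < s) (hR : 0 < R)
    (u : Rn n → ℝ) {x y : Rn n} (hx : x ∈ ball x₀ R) (hy : y ∉ ball x₀ R) :
    tailIntegrand n p s u x₀ y ≤
      (1 + 2 ^ p * |u x| ^ p) * truncatedKernel n p s R (y - x₀) +
        2 ^ p * 2 ^ ((n : ℝ) + p * s) * gagliardoIntegrand n p s u (x, y) := by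
  have hxy : 0 < ‖x - y‖ := norm_pos_iff.2 (sub_ne_zero.2 fun h => hy (h ▸ hx))
  have hdist : ‖x - y‖ ≤ 2 * ‖y - x₀‖ := by
    simp only [mem_ball, dist_eq_norm, not_lt] at hx hy
    linarith [norm_sub_le_norm_sub_add_norm_sub x x₀ y, norm_sub_rev x₀ y]
  have hkernel : ‖y - x₀‖ ^ (-(n : ℝ) - p * s) ≤
      2 ^ ((n : ℝ) + p * s) * ‖x - y‖ ^ (-(n : ℝ) - p * s) := by
    rw [← neg_add']
    exact rpow_neg_norm_le_mul (by positivity) two_pos hxy hdist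
  have hpow : |u y| ^ (p - 1) ≤ 1 + 2 ^ p * (|u x| ^ p + |u x - u y| ^ p) := by
    have hyoung : |u y| ^ (p - 1) ≤ 1 + |u y| ^ p := by
      simpa [add_comm] using rpow_sub_one_mul_le_add hp (abs_nonneg (u y)) zero_le_one
    have htri : |u y| ≤ |u x| + |u x - u y| := by
      linarith [abs_sub_abs_le_abs_sub (u y) (u x), abs_sub_comm (u y) (u x)]
    have hconv := (rpow_le_rpow (abs_nonneg _) htri (by linarith)).trans
      (add_rpow_le_two_rpow_mul (p := p) (by linarith) (abs_nonneg _) (abs_nonneg _))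
    linarith
  rw [truncatedKernel_eq_of_notMem_ball hR hy, tailIntegrand, gagliardoIntegrand]
  set k := ‖y - x₀‖ ^ (-(n : ℝ) - p * s)
  calc |u y| ^ (p - 1) * k ≤ (1 + 2 ^ p * (|u x| ^ p + |u x - u y| ^ p)) * k := by gcongr
    _ = (1 + 2 ^ p * |u x| ^ p) * k + 2 ^ p * |u x - u y| ^ p * k := by ring
    _ ≤ (1 + 2 ^ p * |u x| ^ p) * k + 2 ^ p * |u x - u y| ^ p *
          (2 ^ ((n : ℝ) + p * s) * ‖x - y‖ ^ (-(n : ℝ) - p * s)) := by gcongr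
    _ = _ := by ring

lemma integrableOn_tailIntegrand {Ω : Set (Rn n)} (hn : 1 ≤ n) (hp : 1 ≤ p) (hs0 : 0 < s)
    (hs1 : s < 1) (hR : 0 < R) (hu : MemX n p s Ω u) (hsub : ball x₀ R ⊆ Ω) :
    IntegrableOn (tailIntegrand n p s u x₀) (ball x₀ R)ᶜ := by
  have hp0 : 0 < p := by linarith
  obtain ⟨x, hint, hx⟩ : ∃ x, Integrable (fun y => gagliardoIntegrand n p s u (x, y)) ∧
      x ∈ ball x₀ R := by
    have hgag : IntegrableOn (gagliardoIntegrand n p s u) (ball x₀ R ×ˢ univ) :=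
      hu.2.2.mono_set fun z hz => Or.inl (hsub hz.1)
    rw [IntegrableOn, Measure.volume_eq_prod, ← Measure.prod_restrict,
      Measure.restrict_univ] at hgag
    have : NeZero (volume.restrict (ball x₀ R)) :=
      ⟨by simpa using (measure_ball_pos volume x₀ hR).ne'⟩
    exact (hgag.prod_right_ae.and (ae_restrict_mem measurableSet_ball)).exists
  have hmaj := (((integrable_truncatedKernel hn hp0 hs0 hs1 hR).comp_sub_right x₀).const_mul
    (1 + 2 ^ p * |u x| ^ p)).add (hint.const_mul (2 ^ p * 2 ^ ((n : ℝ) + p * s)))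
  refine hmaj.integrableOn.mono' (measurable_tailIntegrand hu.1).aestronglyMeasurable ?_
  filter_upwards [ae_restrict_mem measurableSet_ball.compl] with y hy
  rw [norm_of_nonneg (tailIntegrand_nonneg _ _ _)]
  exact tailIntegrand_le_add_gagliardoIntegrand hp hs0 hR u hx hy

lemma minusPart_nonneg (u : Rn n → ℝ) (x : Rn n) : 0 ≤ minusPart u x := le_max_right _ _

lemma plusPart_nonneg (u : Rn n → ℝ) (x : Rn n) : 0 ≤ plusPart u x := le_max_right _ _

lemma measurable_plusPart (hu : Measurable u) : Measurable (plusPart u) := by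
  unfold plusPart
  fun_prop

lemma measurable_minusPart (hu : Measurable u) : Measurable (minusPart u) := by
  unfold minusPart
  fun_prop

lemma abs_minusPart_le (u : Rn n → ℝ) (x : Rn n) : |minusPart u x| ≤ |u x| := by
  rw [abs_of_nonneg (minusPart_nonneg u x)]
  exact max_le (neg_le_abs _) (abs_nonneg _)

lemma integrableOn_tailIntegrand_minusPart {S : Set (Rn n)} (hp : 1 ≤ p) (hu : Measurable u)
    (h : IntegrableOn (tailIntegrand n p s u x₀) S) :
    IntegrableOn (tailIntegrand n p s (minusPart u) x₀) S := by
  refine h.mono' (measurable_tailIntegrand (measurable_minusPart hu)).aestronglyMeasurable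
    (.of_forall fun y => ?_)
  rw [norm_of_nonneg (tailIntegrand_nonneg _ _ _)]
  exact mul_le_mul_of_nonneg_right
    (rpow_le_rpow (abs_nonneg _) (abs_minusPart_le u y) (by linarith)) (by positivity)

end Tail

section Oscillation

variable {α : Type*} [MeasurableSpace α] {μ : Measure α} [IsFiniteMeasure μ] [NeZero μ]
  {p : ℝ} {f : α → ℝ}

lemma average_abs_rpow_le (hp : 1 ≤ p) (hf : Integrable f μ)
    (hfp : Integrable (fun x => |f x| ^ p) μ) :
    (⨍ x, |f x| ∂μ) ^ p ≤ ⨍ x, |f x| ^ p ∂μ :=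
  (convexOn_rpow hp).map_average_le (Real.continuous_rpow_const (by linarith)).continuousOn
    isClosed_Ici (.of_forall fun x => abs_nonneg (f x)) hf.abs hfp

lemma average_abs_le_rpow_average (hp : 1 ≤ p) (hf : Integrable f μ)
    (hfp : Integrable (fun x => |f x| ^ p) μ) :
    ⨍ x, |f x| ∂μ ≤ (⨍ x, |f x| ^ p ∂μ) ^ (1 / p) := by
  have h0 : 0 ≤ ⨍ x, |f x| ∂μ := integral_nonneg fun x => abs_nonneg (f x)
  have hp0 : 0 ≤ ⨍ x, |f x| ^ p ∂μ := integral_nonneg fun x => by positivity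
  rw [one_div, le_rpow_inv_iff_of_pos h0 hp0 (by linarith)]
  exact average_abs_rpow_le hp hf hfp

lemma abs_sub_average_rpow_le (hp : 1 ≤ p) (hf : Integrable f μ) (c : ℝ)
    (hfp : Integrable (fun y => |c - f y| ^ p) μ) :
    |c - ⨍ y, f y ∂μ| ^ p ≤ ⨍ y, |c - f y| ^ p ∂μ := by
  have hsub : Integrable (fun y => c - f y) μ := (integrable_const c).sub hf
  have hcenter : c - ⨍ y, f y ∂μ = ⨍ y, (c - f y) ∂μ := by
    have hμ : μ.real univ ≠ 0 := measureReal_univ_pos.ne'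
    rw [average_eq, average_eq, integral_sub (integrable_const _) hf, integral_const]
    simp only [smul_eq_mul]
    field_simp
  rw [hcenter]
  exact (rpow_le_rpow (abs_nonneg _) abs_integral_le_integral_abs (by linarith)).trans
    (average_abs_rpow_le hp hsub hfp)

variable (hp : 1 ≤ p) (hf : Integrable f μ)
  (hint : Integrable (fun z : α × α => |f z.1 - f z.2| ^ p) (μ.prod μ))

include hp hf hint

lemma ae_abs_sub_average_rpow_le :
    ∀ᵐ x ∂μ, |f x - ⨍ y, f y ∂μ| ^ p ≤ ⨍ y, |f x - f y| ^ p ∂μ := by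
  filter_upwards [hint.prod_right_ae] with x hx
  exact abs_sub_average_rpow_le hp hf (f x) hx

lemma integrable_abs_sub_average_rpow : Integrable (fun x => |f x - ⨍ y, f y ∂μ| ^ p) μ := by
  have hmeas : AEStronglyMeasurable (fun x => |f x - ⨍ y, f y ∂μ| ^ p) μ :=
    ((hf.1.aemeasurable.sub_const _).abs.pow_const p).aestronglyMeasurable
  refine (hint.integral_prod_left.const_mul (μ.real univ)⁻¹).mono' hmeas ?_
  filter_upwards [ae_abs_sub_average_rpow_le hp hf hint] with x hx
  rwa [norm_of_nonneg (by positivity), ← smul_eq_mul, ← average_eq]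

lemma average_abs_sub_average_rpow_le :
    ⨍ x, |f x - ⨍ y, f y ∂μ| ^ p ∂μ ≤
      (μ.real univ)⁻¹ * ((μ.real univ)⁻¹ * ∫ z, |f z.1 - f z.2| ^ p ∂μ.prod μ) := by
  rw [average_eq, smul_eq_mul, integral_prod _ hint]
  refine mul_le_mul_of_nonneg_left ?_ (inv_nonneg.2 measureReal_nonneg)
  rw [← integral_const_mul]
  refine integral_mono_ae (integrable_abs_sub_average_rpow hp hf hint)
    (hint.integral_prod_left.const_mul _) ?_
  filter_upwards [ae_abs_sub_average_rpow_le hp hf hint] with x hx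
  rwa [← smul_eq_mul, ← average_eq]

end Oscillation

section Potential

variable {n : ℕ} {p q b r R : ℝ} {x₀ : Rn n} {u V : Rn n → ℝ} {B Ω : Set (Rn n)}

lemma abs_le_plusPart_add_minusPart (V : Rn n → ℝ) (x : Rn n) :
    |V x| ≤ plusPart V x + minusPart V x :=
  abs_le'.2 ⟨le_add_of_le_of_nonneg (le_max_left _ _) (minusPart_nonneg V x),
    le_add_of_nonneg_of_le (plusPart_nonneg V x) (le_max_left _ _)⟩

lemma rpow_sub_one_mul_logTestFunction_mem_Icc {x : Rn n} (hp : 1 ≤ p) (hb : 0 < b)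
    (hux : 0 ≤ u x) : u x ^ (p - 1) * logTestFunction p b r x₀ u x ∈ Icc (0 : ℝ) 1 := by
  have hφ := logTestFunction_nonneg (p := p) (r := r) hb x₀ u x
  refine ⟨by positivity, ?_⟩
  rw [logTestFunction_of_nonneg hux, mul_left_comm]
  exact mul_le_one₀ (cutoff_rpow_le_one (by linarith) x₀ r x) (by positivity)
    (rpow_sub_one_mul_add_rpow_one_sub_le_one hp hb hux)

lemma integral_potential_mul_logTestFunction_le (hp : 1 < p) (hb : 0 < b) (hr : 0 < r)
    (hrR : 3 / 2 * r ≤ R) (hu : Measurable u) (hV : Measurable V)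
    (hVplus : IntegrableOn (plusPart V) (ball x₀ (3 / 2 * r)))
    (hVminus : IntegrableOn (minusPart V) (ball x₀ (3 / 2 * r)))
    (hu0 : ∀ x ∈ ball x₀ R, 0 ≤ u x) :
    ∫ x, V x * (|u x| ^ (p - 2) * u x) * logTestFunction p b r x₀ u x ≤
      ∫ x in ball x₀ (3 / 2 * r), plusPart V x := by
  have hφ : Measurable (logTestFunction p b r x₀ u) := measurable_logTestFunction hu
  rw [← setIntegral_eq_integral_of_forall_compl_eq_zero (s := ball x₀ (3 / 2 * r))
    fun x hx => by rw [logTestFunction_eq_zero (by linarith) hr u hx, mul_zero]]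
  have hweight : ∀ x ∈ ball x₀ (3 / 2 * r),
      (|u x| ^ (p - 2) * u x) * logTestFunction p b r x₀ u x ∈ Icc (0 : ℝ) 1 := fun x hx => by
    have hux := hu0 x (ball_subset_ball hrR hx)
    rw [show |u x| ^ (p - 2) * u x = u x ^ (p - 1) from Hp_of_nonneg hp.ne' hux]
    exact rpow_sub_one_mul_logTestFunction_mem_Icc hp.le hb hux
  refine setIntegral_mono_on ?_ hVplus measurableSet_ball fun x hx => ?_
  · refine (hVplus.add hVminus).mono' (Measurable.aestronglyMeasurable (by fun_prop)) ?_
    filter_upwards [ae_restrict_mem measurableSet_ball] with x hx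
    obtain ⟨h0, h1⟩ := hweight x hx
    rw [mul_assoc, norm_mul, norm_of_nonneg h0]
    exact (mul_le_of_le_one_right (norm_nonneg _) h1).trans (abs_le_plusPart_add_minusPart V x)
  · obtain ⟨h0, h1⟩ := hweight x hx
    rw [mul_assoc]
    exact (mul_le_mul_of_nonneg_right (le_max_left _ _) h0).trans
      (mul_le_of_le_one_right (plusPart_nonneg V x) h1)

lemma integrableOn_of_integrableOn_rpow (hq : 1 ≤ q) (hV : Measurable V) (hV0 : ∀ x, 0 ≤ V x)
    (hB : Bornology.IsBounded B) (h : IntegrableOn (fun x => V x ^ q) B) : IntegrableOn V B := by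
  refine ((integrableOn_const (C := (1 : ℝ)) hB.measure_lt_top.ne).add h).mono'
    hV.aestronglyMeasurable (.of_forall fun x => ?_)
  rw [norm_of_nonneg (hV0 x)]
  exact le_one_add_rpow hq (hV0 x)

lemma lqNormOn_mono (hq : 0 < q) (h : IntegrableOn (fun x => |V x| ^ q) Ω) (hBΩ : B ⊆ Ω) :
    lqNormOn n q B V ≤ lqNormOn n q Ω V :=
  rpow_le_rpow (integral_nonneg fun _ => by positivity)
    (setIntegral_mono_set h (.of_forall fun x => rpow_nonneg (abs_nonneg (V x)) q)
      hBΩ.eventuallyLE) (by positivity)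

lemma setIntegral_le_lqNormOn_mul (hq : 1 < q) (hV : Measurable V) (hV0 : ∀ x, 0 ≤ V x)
    (hB : Bornology.IsBounded B) (h : IntegrableOn (fun x => V x ^ q) B) :
    ∫ x in B, V x ≤ lqNormOn n q B V * volume.real B ^ (1 - 1 / q) := by
  have : IsFiniteMeasure (volume.restrict B) := ⟨by simpa using hB.measure_lt_top⟩
  have hconj := Real.HolderConjugate.conjExponent hq
  have hL : MemLp V (ENNReal.ofReal q) (volume.restrict B) := by
    rw [← integrable_norm_rpow_iff hV.aestronglyMeasurable
      (by simpa using by linarith) ENNReal.ofReal_ne_top, ENNReal.toReal_ofReal (by linarith)]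
    simpa only [IntegrableOn, norm_of_nonneg (hV0 _)] using h
  have holder := integral_mul_le_Lp_mul_Lq_of_nonneg (μ := volume.restrict B) hconj
    (g := fun _ => (1 : ℝ)) (.of_forall hV0) (.of_forall fun _ => zero_le_one) hL (memLp_const 1)
  have hexp : 1 / q.conjExponent = 1 - 1 / q := by
    simpa only [one_div] using hconj.one_sub_inv.symm
  simpa only [mul_one, Real.one_rpow, integral_const, smul_eq_mul, hexp, lqNormOn,
    measureReal_restrict_apply_univ, abs_of_nonneg (hV0 _)] using holder

end Potential

section FarWeight

variable {E : Type*} [PseudoMetricSpace E] {r R : ℝ} {x₀ : E} {g : E → ℝ} {z : E × E}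

/-- The function `(x, y) ↦ g y`, restricted to the far interactions: `x` in the support of the
cutoff of `B_r(x₀)` and `y` outside `B_R(x₀)`. -/
def farWeight (r R : ℝ) (x₀ : E) (g : E → ℝ) (z : E × E) : ℝ :=
  (ball x₀ (3 / 2 * r) ×ˢ (ball x₀ R)ᶜ).indicator (fun z => g z.2) z

lemma farWeight_nonneg (hg : ∀ y, 0 ≤ g y) (z : E × E) : 0 ≤ farWeight r R x₀ g z :=
  indicator_nonneg (fun z _ => hg z.2) z

lemma farWeight_eq (hx : z.1 ∈ ball x₀ (3 / 2 * r)) (hy : z.2 ∉ ball x₀ R) :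
    farWeight r R x₀ g z = g z.2 :=
  indicator_of_mem (s := ball x₀ (3 / 2 * r) ×ˢ (ball x₀ R)ᶜ) ⟨hx, hy⟩ fun z => g z.2

variable [MeasurableSpace E] [OpensMeasurableSpace E] {μ : Measure E} [SigmaFinite μ]

lemma integrable_farWeight (hr : μ (ball x₀ (3 / 2 * r)) ≠ ∞)
    (hg : IntegrableOn g (ball x₀ R)ᶜ μ) : Integrable (farWeight r R x₀ g) (μ.prod μ) := by
  refine (integrable_indicator_iff (measurableSet_ball.prod measurableSet_ball.compl)).2 ?_
  have : IsFiniteMeasure (μ.restrict (ball x₀ (3 / 2 * r))) :=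
    isFiniteMeasure_restrict.2 hr
  rw [IntegrableOn, ← Measure.prod_restrict]
  exact Integrable.comp_snd hg _

lemma integral_farWeight :
    ∫ z, farWeight r R x₀ g z ∂μ.prod μ =
      μ.real (ball x₀ (3 / 2 * r)) * ∫ y in (ball x₀ R)ᶜ, g y ∂μ := by
  unfold farWeight
  rw [integral_indicator (measurableSet_ball.prod measurableSet_ball.compl)]
  simpa using setIntegral_prod_mul (μ := μ) (ν := μ) (fun _ => (1 : ℝ)) g
    (ball x₀ (3 / 2 * r)) (ball x₀ R)ᶜ

end FarWeight

lemma farWeight_mul_rpow_norm_le {E : Type*} [SeminormedAddCommGroup E] {a r R : ℝ} {x₀ : E}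
    {g : E → ℝ} (ha : 0 ≤ a) (hR : 0 < R) (hrR : r < R / 2) (hg : ∀ y, 0 ≤ g y) (z : E × E) :
    farWeight r R x₀ g z * ‖z.1 - z.2‖ ^ (-a) ≤
      4 ^ a * farWeight r R x₀ (fun y => g y * ‖y - x₀‖ ^ (-a)) z := by
  by_cases hz : z ∈ ball x₀ (3 / 2 * r) ×ˢ (ball x₀ R)ᶜ
  swap
  · simp only [farWeight, indicator_of_notMem hz, zero_mul, mul_zero, le_refl]
  rw [farWeight_eq hz.1 hz.2, farWeight_eq hz.1 hz.2, mul_left_comm]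
  have hx : ‖z.1 - x₀‖ < 3 / 2 * r := mem_ball_iff_norm.1 hz.1
  have hy : R ≤ ‖z.2 - x₀‖ := not_lt.1 fun h => hz.2 (mem_ball_iff_norm.2 h)
  have hdist : ‖z.2 - x₀‖ ≤ 4 * ‖z.1 - z.2‖ := by
    linarith [norm_sub_le_norm_sub_add_norm_sub z.2 z.1 x₀, norm_sub_rev z.1 z.2]
  exact mul_le_mul_of_nonneg_left
    (rpow_neg_norm_le_mul ha four_pos (hR.trans_le hy) hdist) (hg z.2)

section Pointwise

variable {n : ℕ} {p b r R : ℝ} {x₀ : Rn n} {u : Rn n → ℝ} {x y : Rn n}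

/-- The constant multiplying the cutoff energy and the far interactions in the pointwise bound for
the pairing of `u` with `logTestFunction`. -/
def interactionConst (p : ℝ) : ℝ := cutoffConst p + 2 ^ (p - 1)

lemma interactionConst_pos (hp : 1 < p) : 0 < interactionConst p :=
  add_pos (cutoffConst_pos hp) (by positivity)

lemma Hp_sub_mul_logTestFunction_sub_le_near (hp : 1 < p) (hb : 0 < b) (hr : 0 < r)
    (hx : 0 ≤ u x) (hy : 0 ≤ u y) :
    Hp p (u x - u y) * (logTestFunction p b r x₀ u x - logTestFunction p b r x₀ u y) ≤
      cutoffConst p * |cutoff x₀ r x - cutoff x₀ r y| ^ p -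
        (p - 1) * (ball x₀ r ×ˢ ball x₀ r).indicator
          (fun z => |log (u z.1 + b) - log (u z.2 + b)| ^ p) (x, y) := by
  have hxb : 0 < u x + b := by linarith
  have hyb : 0 < u y + b := by linarith
  rw [logTestFunction_of_nonneg hx, logTestFunction_of_nonneg hy,
    ← add_sub_add_right_eq_sub (u x) (u y) b]
  by_cases hz : (x, y) ∈ ball x₀ r ×ˢ ball x₀ r
  · rw [indicator_of_mem hz, cutoff_eq_one hr hz.1, cutoff_eq_one hr hz.2, Real.one_rpow, one_mul,
      one_mul, sub_self, abs_zero, zero_rpow (by linarith), mul_zero, zero_sub]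
    exact Hp_sub_mul_rpow_sub_rpow_le hp hxb hyb
  · rw [indicator_of_notMem hz, mul_zero, sub_zero]
    exact Hp_sub_mul_cutoff_sub_le hp hxb hyb (cutoff_nonneg x₀ r x) (cutoff_nonneg x₀ r y)

lemma Hp_sub_mul_logTestFunction_sub_le_far (hp : 1 < p) (hb : 0 < b) (hr : 0 < r)
    (hrR : 3 / 2 * r ≤ R) (hu0 : ∀ x ∈ ball x₀ R, 0 ≤ u x) (hy : y ∉ ball x₀ R) :
    Hp p (u x - u y) * (logTestFunction p b r x₀ u x - logTestFunction p b r x₀ u y) ≤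
      2 ^ (p - 1) * (|cutoff x₀ r x - cutoff x₀ r y| ^ p +
        b ^ (1 - p) * farWeight r R x₀ (fun y => |minusPart u y| ^ (p - 1)) (x, y)) := by
  have hyr : y ∉ ball x₀ (3 / 2 * r) := fun h => hy (ball_subset_ball hrR h)
  have hfar := farWeight_nonneg (r := r) (R := R) (x₀ := x₀)
    (g := fun y => |minusPart u y| ^ (p - 1)) (fun _ => by positivity) (x, y)
  rw [logTestFunction_eq_zero (by linarith) hr u hyr, sub_zero]
  by_cases hx : x ∈ ball x₀ (3 / 2 * r)
  swap
  · rw [logTestFunction_eq_zero (by linarith) hr u hx, mul_zero]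
    positivity
  have hux := hu0 x (ball_subset_ball hrR hx)
  rw [farWeight_eq hx hy, abs_of_nonneg (minusPart_nonneg u y), logTestFunction_of_nonneg hux,
    cutoff_eq_zero hr hyr, sub_zero, abs_of_nonneg (cutoff_nonneg x₀ r x)]
  set X := cutoff x₀ r x ^ p
  have hX0 : 0 ≤ X := rpow_nonneg (cutoff_nonneg x₀ r x) p
  have hX1 : X ≤ 1 := cutoff_rpow_le_one (by linarith) x₀ r x
  set m := minusPart u y ^ (p - 1)
  have hm : 0 ≤ m := rpow_nonneg (minusPart_nonneg u y) _
  have hXm : X * (b ^ (1 - p) * m) ≤ b ^ (1 - p) * m :=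
    mul_le_of_le_one_left (by positivity) hX1
  calc Hp p (u x - u y) * (X * (u x + b) ^ (1 - p))
      = X * (Hp p (u x - u y) * (u x + b) ^ (1 - p)) := mul_left_comm _ _ _
    _ ≤ X * (2 ^ (p - 1) * (1 + b ^ (1 - p) * m)) :=
        mul_le_mul_of_nonneg_left (Hp_sub_mul_add_rpow_le hp hb hux) hX0
    _ = 2 ^ (p - 1) * (X + X * (b ^ (1 - p) * m)) := by ring
    _ ≤ 2 ^ (p - 1) * (X + b ^ (1 - p) * m) :=
        mul_le_mul_of_nonneg_left (by linarith) (by positivity)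

lemma Hp_sub_mul_logTestFunction_sub_le (hp : 1 < p) (hb : 0 < b) (hr : 0 < r)
    (hrR : 3 / 2 * r ≤ R) (hu0 : ∀ x ∈ ball x₀ R, 0 ≤ u x) (z : Rn n × Rn n) :
    Hp p (u z.1 - u z.2) * (logTestFunction p b r x₀ u z.1 - logTestFunction p b r x₀ u z.2) ≤
      interactionConst p * (|cutoff x₀ r z.1 - cutoff x₀ r z.2| ^ p + b ^ (1 - p) *
        (farWeight r R x₀ (fun y => |minusPart u y| ^ (p - 1)) z +
          farWeight r R x₀ (fun y => |minusPart u y| ^ (p - 1)) z.swap)) -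
      (p - 1) * (ball x₀ r ×ˢ ball x₀ r).indicator
        (fun z => |log (u z.1 + b) - log (u z.2 + b)| ^ p) z := by
  have hC := cutoffConst_pos hp
  have := interactionConst_pos hp
  have hCI : cutoffConst p ≤ interactionConst p := le_add_of_nonneg_right (by positivity)
  have h2I : 2 ^ (p - 1) ≤ interactionConst p := le_add_of_nonneg_left hC.le
  set P := |cutoff x₀ r z.1 - cutoff x₀ r z.2| ^ p
  set F := farWeight r R x₀ (fun y => |minusPart u y| ^ (p - 1))
  have : 0 ≤ P := by positivity
  have hF (z) : 0 ≤ F z := farWeight_nonneg (fun _ => by positivity) z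
  have hF1 := hF z
  have hF2 := hF z.swap
  have hsub : ball x₀ r ⊆ ball x₀ R := ball_subset_ball (by linarith)
  by_cases hx : z.1 ∈ ball x₀ R
  · by_cases hy : z.2 ∈ ball x₀ R
    · refine (Hp_sub_mul_logTestFunction_sub_le_near hp hb hr (hu0 _ hx) (hu0 _ hy)).trans
        (sub_le_sub_right ?_ _)
      gcongr
      exact le_add_of_nonneg_right (mul_nonneg (by positivity) (add_nonneg hF1 hF2))
    · rw [indicator_of_notMem fun h => hy (hsub h.2), mul_zero, sub_zero]
      refine (Hp_sub_mul_logTestFunction_sub_le_far hp hb hr hrR hu0 hy).trans ?_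
      gcongr
      exact le_add_of_nonneg_right hF2
  · rw [indicator_of_notMem fun h => hx (hsub h.1), mul_zero, sub_zero]
    have hfar := Hp_sub_mul_logTestFunction_sub_le_far (x := z.2) hp hb hr hrR hu0 hx
    rw [abs_sub_comm, ← neg_sub (u z.1), Hp_neg, neg_mul, ← mul_neg, neg_sub] at hfar
    refine hfar.trans ?_
    gcongr
    exact le_add_of_nonneg_left hF1

end Pointwise

section Pairing

variable {n : ℕ} {p s lam Lam b r R : ℝ} {x₀ : Rn n} {K u : Rn n → ℝ} {Ω : Set (Rn n)}

lemma mul_le_sub_of_le_sub {A B D k l m : ℝ} (h : D ≤ A - B) (hA : 0 ≤ A) (hB : 0 ≤ B)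
    (hk : 0 ≤ k) (hl : l ≤ k) (hm : k ≤ m) : D * k ≤ A * m - B * l := by
  calc D * k ≤ (A - B) * k := mul_le_mul_of_nonneg_right h hk
    _ = A * k - B * k := sub_mul A B k
    _ ≤ A * m - B * l :=
      sub_le_sub (mul_le_mul_of_nonneg_left hm hA) (mul_le_mul_of_nonneg_left hl hB)

lemma gagliardoIntegrand_eq_zero (hp : p ≠ 0) (u : Rn n → ℝ) {z : Rn n × Rn n} (hz : z.1 = z.2) :
    gagliardoIntegrand n p s u z = 0 := by
  rw [gagliardoIntegrand, hz, sub_self, abs_zero, zero_rpow hp, zero_mul]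

lemma farWeight_minusPart_add_swap_mul_rpow_norm_le (hp : 0 < p) (hs0 : 0 < s) (hr : 0 < r)
    (hrR : r < R / 2) (u : Rn n → ℝ) (z : Rn n × Rn n) :
    (farWeight r R x₀ (fun y => |minusPart u y| ^ (p - 1)) z +
        farWeight r R x₀ (fun y => |minusPart u y| ^ (p - 1)) z.swap) *
        ‖z.1 - z.2‖ ^ (-(n : ℝ) - p * s) ≤
      4 ^ ((n : ℝ) + p * s) * (farWeight r R x₀ (tailIntegrand n p s (minusPart u) x₀) z +
        farWeight r R x₀ (tailIntegrand n p s (minusPart u) x₀) z.swap) := by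
  have h := farWeight_mul_rpow_norm_le (x₀ := x₀) (a := n + p * s)
    (g := fun y => |minusPart u y| ^ (p - 1)) (by positivity) (by linarith) hrR
    (fun _ => by positivity)
  rw [neg_add'] at h
  have hswap := h z.swap
  rw [Prod.fst_swap, Prod.snd_swap, norm_sub_rev] at hswap
  rw [add_mul, mul_add]
  exact add_le_add (h z) hswap

lemma Hp_sub_mul_logTestFunction_sub_mul_kernel_le (hp : 1 < p) (hs0 : 0 < s) (hs1 : s < 1)
    (hlam : 0 ≤ lam) (hLam : 0 ≤ Lam) (hK : KernelClass n p s lam Lam K) (hb : 0 < b)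
    (hr : 0 < r) (hrR : r < R / 2) (hu0 : ∀ x ∈ ball x₀ R, 0 ≤ u x) (z : Rn n × Rn n) :
    Hp p (u z.1 - u z.2) * (logTestFunction p b r x₀ u z.1 - logTestFunction p b r x₀ u z.2) *
        K (z.1 - z.2) ≤
      cnps n p s * Lam * interactionConst p *
          (gagliardoIntegrand n p s (cutoff x₀ r) z +
            b ^ (1 - p) * (4 ^ ((n : ℝ) + p * s) *
              (farWeight r R x₀ (tailIntegrand n p s (minusPart u) x₀) z +
                farWeight r R x₀ (tailIntegrand n p s (minusPart u) x₀) z.swap))) -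
        (p - 1) * (cnps n p s * lam) * (ball x₀ r ×ˢ ball x₀ r).indicator
          (gagliardoIntegrand n p s fun x => log (u x + b)) z := by
  have hp0 : 0 < p := one_pos.trans hp
  have hp1 : 0 ≤ p - 1 := by linarith
  have hc : 0 < cnps n p s := cnps_pos hp0 hs1
  have hC : 0 < interactionConst p := interactionConst_pos hp
  have hF (z) : 0 ≤ farWeight r R x₀ (tailIntegrand n p s (minusPart u) x₀) z :=
    farWeight_nonneg (tailIntegrand_nonneg _ x₀) z
  have hG (z) : 0 ≤ farWeight r R x₀ (fun y => |minusPart u y| ^ (p - 1)) z :=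
    farWeight_nonneg (fun _ => by positivity) z
  have := hF z
  have := hF z.swap
  have := hG z
  have := hG z.swap
  rcases eq_or_ne z.1 z.2 with hz | hz
  · rw [hz, sub_self, sub_self, mul_zero, zero_mul, gagliardoIntegrand_eq_zero hp0.ne' _ hz,
      indicator_apply_eq_zero.2 fun _ => gagliardoIntegrand_eq_zero hp0.ne' _ hz, mul_zero,
      sub_zero]
    positivity
  have hz0 := sub_ne_zero.2 hz
  have hk0 := kernel_nonneg hp0 hs1 hlam hK hz0
  have hI : 0 ≤ (ball x₀ r ×ˢ ball x₀ r).indicator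
      (fun z => |log (u z.1 + b) - log (u z.2 + b)| ^ p) z :=
    indicator_nonneg (fun _ _ => by positivity) z
  refine (mul_le_sub_of_le_sub
    (Hp_sub_mul_logTestFunction_sub_le hp hb hr (by linarith) hu0 z) (by positivity)
    (mul_nonneg hp1 hI) hk0 (hK.2.2 _ hz0).1 (hK.2.2 _ hz0).2).trans (sub_le_sub ?_ (le_of_eq ?_))
  · have hfar := mul_le_mul_of_nonneg_left (mul_le_mul_of_nonneg_left
      (farWeight_minusPart_add_swap_mul_rpow_norm_le (x₀ := x₀) hp0 hs0 hr hrR u z)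
      (rpow_nonneg hb.le (1 - p))) (show 0 ≤ cnps n p s * Lam * interactionConst p by positivity)
    rw [gagliardoIntegrand]
    linarith
  · by_cases hzS : z ∈ ball x₀ r ×ˢ ball x₀ r
    · rw [indicator_of_mem hzS, indicator_of_mem hzS, gagliardoIntegrand]
      ring
    · rw [indicator_of_notMem hzS, indicator_of_notMem hzS, mul_zero, mul_zero, zero_mul]

lemma integrableOn_gagliardoIntegrand_log (hp : 0 ≤ p) (hb : 0 < b) (hrR : r ≤ R)
    (hu : MemX n p s Ω u) (hsub : ball x₀ R ⊆ Ω) (hu0 : ∀ x ∈ ball x₀ R, 0 ≤ u x) :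
    IntegrableOn (gagliardoIntegrand n p s fun x => log (u x + b)) (ball x₀ r ×ˢ ball x₀ r) := by
  have hrR' : ball x₀ r ⊆ ball x₀ R := ball_subset_ball hrR
  have huS : IntegrableOn (gagliardoIntegrand n p s u) (ball x₀ r ×ˢ ball x₀ r) :=
    hu.2.2.mono_set fun z hz => Or.inl (hsub (hrR' hz.1))
  refine integrableOn_gagliardoIntegrand_of_abs_sub_le hp le_rfl (inv_nonneg.2 hb.le)
    (measurable_log.comp (hu.1.add_const b)) huS huS ?_
  filter_upwards [ae_restrict_mem (measurableSet_ball.prod measurableSet_ball)] with z hz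
  have hx := hu0 _ (hrR' hz.1)
  have hy := hu0 _ (hrR' hz.2)
  rw [zero_mul, zero_add, ← add_sub_add_right_eq_sub (u z.1) (u z.2) b]
  exact abs_log_sub_log_le hb (by linarith) (by linarith)

lemma integral_farWeight_add_swap (hn : 1 ≤ n) (hp : 1 < p) (hs0 : 0 < s) (hR : 0 < R)
    (hT : IntegrableOn (tailIntegrand n p s u x₀) (ball x₀ R)ᶜ) :
    ∫ z : Rn n × Rn n, (farWeight r R x₀ (tailIntegrand n p s u x₀) z +
        farWeight r R x₀ (tailIntegrand n p s u x₀) z.swap) =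
      2 * (volume.real (ball x₀ (3 / 2 * r)) *
        (sphereArea n / (p * s) * R ^ (-(p * s)) * tail n p s u x₀ R ^ (p - 1))) := by
  rw [Measure.volume_eq_prod, integral_add_swap (integrable_farWeight measure_ball_lt_top.ne hT),
    integral_farWeight, setIntegral_tailIntegrand hn hp hs0 hR]

lemma pairing_logTestFunction_le (hn : 1 ≤ n) (hp : 1 < p) (hs0 : 0 < s) (hs1 : s < 1)
    (hlam : 0 ≤ lam) (hLam : 0 ≤ Lam) (hK : KernelClass n p s lam Lam K) (hb : 0 < b)
    (hr : 0 < r) (hrR : r < R / 2) (hu : MemX n p s Ω u)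
    (hφ : MemX n p s Ω (logTestFunction p b r x₀ u)) (hsub : ball x₀ R ⊆ Ω)
    (hu0 : ∀ x ∈ ball x₀ R, 0 ≤ u x) :
    pairing n p K u (logTestFunction p b r x₀ u) ≤
      cnps n p s * Lam * interactionConst p *
          (2 * (volume.real (ball x₀ (3 / 2 * r)) * (r ^ (-(p * s)) * truncatedKernelMass n p s)) +
            b ^ (1 - p) * (4 ^ ((n : ℝ) + p * s) * (2 * (volume.real (ball x₀ (3 / 2 * r)) *
              (sphereArea n / (p * s) * R ^ (-(p * s)) *
                tail n p s (minusPart u) x₀ R ^ (p - 1)))))) -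
        (p - 1) * (cnps n p s * lam) * ∫ z in ball x₀ r ×ˢ ball x₀ r,
          gagliardoIntegrand n p s (fun x => log (u x + b)) z := by
  have hp0 : 0 < p := one_pos.trans hp
  have hc : 0 < cnps n p s := cnps_pos hp0 hs1
  have := interactionConst_pos hp
  have hS := measurableSet_ball (x := x₀) (ε := r).prod (measurableSet_ball (x := x₀) (ε := r))
  have hsub' : ball x₀ (3 / 2 * r) ⊆ Ω := (ball_subset_ball (by linarith)).trans hsub
  have hT : IntegrableOn (tailIntegrand n p s (minusPart u) x₀) (ball x₀ R)ᶜ :=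
    integrableOn_tailIntegrand_minusPart hp.le hu.1
      (integrableOn_tailIntegrand hn hp.le hs0 hs1 (by linarith) hu hsub)
  have hfar : Integrable (farWeight r R x₀ (tailIntegrand n p s (minusPart u) x₀)) :=
    integrable_farWeight measure_ball_lt_top.ne hT
  have hcut := integrable_gagliardoIntegrand_cutoff hn hp0 hs0 hs1 hr x₀
  have hlog := (integrable_indicator_iff hS).2
    (integrableOn_gagliardoIntegrand_log (r := r) hp0.le hb (by linarith) hu hsub hu0)
  have hpair := integrable_pairing hp hs1 hlam hLam hK hu hφ
    fun x hx => logTestFunction_eq_zero hp0 hr u fun h => hx (hsub' h)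
  have hA := (hcut.add (((hfar.add hfar.swap).const_mul (4 ^ ((n : ℝ) + p * s))).const_mul
    (b ^ (1 - p)))).const_mul (cnps n p s * Lam * interactionConst p)
  have hB := hlog.const_mul ((p - 1) * (cnps n p s * lam))
  refine (integral_mono hpair (hA.sub hB) fun z =>
    Hp_sub_mul_logTestFunction_sub_mul_kernel_le hp hs0 hs1 hlam hLam hK hb hr hrR hu0 z).trans ?_
  rw [integral_sub' hA hB, integral_const_mul, integral_const_mul, integral_indicator hS]
  refine sub_le_sub_right (mul_le_mul_of_nonneg_left ?_ (by positivity)) _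
  rw [integral_add' hcut (((hfar.add hfar.swap).const_mul _).const_mul _), integral_const_mul,
    integral_const_mul]
  gcongr
  · exact integral_gagliardoIntegrand_cutoff_le hn hp0 hs0 hs1 hr x₀
  · exact (integral_farWeight_add_swap hn hp hs0 (by linarith) hT).le

end Pairing

section LogEnergy

variable {n : ℕ} {p s q lam Lam b r R D : ℝ} {x₀ : Rn n} {K V u : Rn n → ℝ} {Ω : Set (Rn n)}

lemma volume_real_ball_eq_rpow_mul (hr : 0 < r) (x₀ : Rn n) :
    volume.real (ball x₀ r) = r ^ (n : ℝ) * volume.real (ball (0 : Rn n) 1) := by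
  rw [measureReal_def, Measure.addHaar_ball_of_pos _ _ hr, ENNReal.toReal_mul,
    ENNReal.toReal_ofReal (by positivity), measureReal_def, finrank_euclideanSpace_fin,
    Real.rpow_natCast]

lemma volume_real_ball_pos (hr : 0 < r) (x₀ : Rn n) : 0 < volume.real (ball x₀ r) :=
  ENNReal.toReal_pos (measure_ball_pos _ _ hr).ne' measure_ball_lt_top.ne

lemma lqNormOn_nonneg (q : ℝ) (Ω : Set (Rn n)) (f : Rn n → ℝ) : 0 ≤ lqNormOn n q Ω f :=
  rpow_nonneg (integral_nonneg fun _ => by positivity) _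

lemma tail_nonneg (hn : 1 ≤ n) (hp : 0 < p) (hs0 : 0 < s) (hR : 0 < R) (u : Rn n → ℝ)
    (x₀ : Rn n) : 0 ≤ tail n p s u x₀ R := by
  have := sphereArea_pos hn
  exact rpow_nonneg (mul_nonneg (by positivity) (integral_nonneg fun _ => by positivity)) _

lemma le_diam_of_ball_subset (hn : 1 ≤ n) (hr : 0 < r) (hrR : r < R)
    (hΩ : Bornology.IsBounded Ω) (hsub : ball x₀ R ⊆ Ω) : r ≤ diam Ω := by
  set e : Rn n := EuclideanSpace.single ⟨0, hn⟩ r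
  have he : ‖e‖ = r := by rw [PiLp.norm_single, norm_of_nonneg hr.le]
  have hmem : x₀ + e ∈ Ω := hsub (by rwa [mem_ball_iff_norm, add_sub_cancel_left, he])
  have hdist := dist_le_diam_of_mem hΩ hmem (hsub (mem_ball_self (hr.trans hrR)))
  rwa [dist_eq_norm, add_sub_cancel_left, he] at hdist

lemma rpow_le_max_one {M θ : ℝ} (hM : 0 ≤ M) (hθ : θ ∈ Icc (0 : ℝ) 1) : M ^ θ ≤ max 1 M :=
  calc M ^ θ ≤ max 1 M ^ θ := rpow_le_rpow hM (le_max_right _ _) hθ.1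
    _ ≤ max 1 M ^ (1 : ℝ) := rpow_le_rpow_of_exponent_le (le_max_left _ _) hθ.2
    _ = max 1 M := Real.rpow_one _

/-- The volume of the ball of radius `3 / 2` in `ℝⁿ`. -/
def enlargedBallVolume (n : ℕ) : ℝ := (3 / 2 : ℝ) ^ (n : ℝ) * volume.real (ball (0 : Rn n) 1)

lemma enlargedBallVolume_pos (n : ℕ) : 0 < enlargedBallVolume n :=
  mul_pos (by positivity) (volume_real_ball_pos one_pos 0)

lemma volume_real_ball_enlarged (hr : 0 < r) (x₀ : Rn n) :
    volume.real (ball x₀ (3 / 2 * r)) = enlargedBallVolume n * r ^ (n : ℝ) := by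
  rw [volume_real_ball_eq_rpow_mul (by positivity), mul_rpow (by norm_num) hr.le,
    enlargedBallVolume]
  ring

lemma mul_rpow_one_sub_le {M ν a : ℝ} (hν : 0 ≤ ν) (ha : 0 < a) (hq1 : 1 < q) (hq : ν / a < q)
    (hr : 0 < r) (hrD : r ≤ D) (hM : 0 ≤ M) :
    (M * r ^ ν) ^ (1 - 1 / q) ≤ max 1 M * max 1 D ^ a * r ^ (ν - a) := by
  have hq0 : 0 < q := one_pos.trans hq1
  have hq_inv : 1 / q ≤ 1 := (div_le_one hq0).2 hq1.le
  have hνq : ν / q < a := (div_lt_comm₀ ha hq0).1 hq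
  have hνq0 : 0 ≤ ν / q := by positivity
  have hM1 : M ^ (1 - 1 / q) ≤ max 1 M :=
    rpow_le_max_one hM ⟨by linarith, by linarith [one_div_pos.2 hq0]⟩
  have hrD1 : r ^ (a - ν / q) ≤ max 1 D ^ a :=
    calc r ^ (a - ν / q) ≤ max 1 D ^ (a - ν / q) :=
          rpow_le_rpow hr.le (hrD.trans (le_max_right _ _)) (by linarith)
      _ ≤ max 1 D ^ a := rpow_le_rpow_of_exponent_le (le_max_left _ _) (by linarith)
  calc (M * r ^ ν) ^ (1 - 1 / q) = M ^ (1 - 1 / q) * r ^ (a - ν / q) * r ^ (ν - a) := by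
        rw [mul_rpow hM (by positivity), ← rpow_mul hr.le, mul_assoc, ← rpow_add hr]
        congr 2
        ring
    _ ≤ max 1 M * max 1 D ^ a * r ^ (ν - a) := by gcongr

lemma mul_setIntegral_gagliardoIntegrand_log_le (hn : 1 ≤ n) (hp : 1 < p) (hs0 : 0 < s)
    (hs1 : s < 1) (hlam : 0 ≤ lam) (hLam : 0 ≤ Lam) (hq : 1 < q)
    (hΩ : Bornology.IsBounded Ω) (hV : Measurable V) (hVminus : IntegrableOn (minusPart V) Ω)
    (hVplus : IntegrableOn (fun x => plusPart V x ^ q) Ω) (hK : KernelClass n p s lam Lam K)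
    (hu : MemX n p s Ω u)
    (hsuper : ∀ φ, MemY0 n p s Ω V φ → (∀ x, 0 ≤ φ x) →
      0 ≤ pairing n p K u φ + ∫ x, V x * (|u x| ^ (p - 2) * u x) * φ x)
    (hsub : ball x₀ R ⊆ Ω) (hu0 : ∀ x ∈ ball x₀ R, 0 ≤ u x) (hb : 0 < b) (hr : 0 < r)
    (hrR : r < R / 2) :
    (p - 1) * (cnps n p s * lam) * ∫ z in ball x₀ r ×ˢ ball x₀ r,
        gagliardoIntegrand n p s (fun x => log (u x + b)) z ≤
      cnps n p s * Lam * interactionConst p *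
          (2 * (volume.real (ball x₀ (3 / 2 * r)) * (r ^ (-(p * s)) * truncatedKernelMass n p s)) +
            b ^ (1 - p) * (4 ^ ((n : ℝ) + p * s) * (2 * (volume.real (ball x₀ (3 / 2 * r)) *
              (sphereArea n / (p * s) * R ^ (-(p * s)) *
                tail n p s (minusPart u) x₀ R ^ (p - 1)))))) +
        lqNormOn n q Ω (plusPart V) * volume.real (ball x₀ (3 / 2 * r)) ^ (1 - 1 / q) := by
  have hrR' : 3 / 2 * r ≤ R := by linarith
  have hsub' : ball x₀ (3 / 2 * r) ⊆ Ω := (ball_subset_ball hrR').trans hsub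
  have hVplus' : IntegrableOn (plusPart V) Ω :=
    integrableOn_of_integrableOn_rpow hq.le (measurable_plusPart hV) (plusPart_nonneg V) hΩ hVplus
  have hφ := memY0_logTestFunction hn hp.le hs0 hs1 hb hr hΩ hu hVplus' hVminus hsub'
  have htest := hsuper _ hφ (logTestFunction_nonneg hb x₀ u)
  have hpair :=
    pairing_logTestFunction_le hn hp hs0 hs1 hlam hLam hK hb hr hrR hu hφ.1.1 hsub hu0
  have hpot := integral_potential_mul_logTestFunction_le hp hb hr hrR' hu.1 hV
    (hVplus'.mono_set hsub') (hVminus.mono_set hsub') hu0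
  have hholder := setIntegral_le_lqNormOn_mul hq (measurable_plusPart hV) (plusPart_nonneg V)
    (B := ball x₀ (3 / 2 * r)) isBounded_ball (hVplus.mono_set hsub')
  have hmono : lqNormOn n q (ball x₀ (3 / 2 * r)) (plusPart V) ≤ lqNormOn n q Ω (plusPart V) :=
    lqNormOn_mono (one_pos.trans hq) (by simpa only [abs_of_nonneg (plusPart_nonneg V _)]) hsub'
  have := mul_le_mul_of_nonneg_right hmono
    (show 0 ≤ volume.real (ball x₀ (3 / 2 * r)) ^ (1 - 1 / q) by positivity)
  linarith

/-- The constant of the logarithmic energy estimate on the balls of a domain of diameter `D`. -/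
def logEnergyConst (n : ℕ) (p s lam Lam D : ℝ) : ℝ :=
  (cnps n p s * Lam * interactionConst p *
      (2 * enlargedBallVolume n * truncatedKernelMass n p s +
        4 ^ ((n : ℝ) + p * s) * (2 * enlargedBallVolume n * (sphereArea n / (p * s)))) +
    max 1 (enlargedBallVolume n) * max 1 D ^ (p * s)) / ((p - 1) * (cnps n p s * lam))

lemma logEnergyConst_pos (hn : 1 ≤ n) (hp : 1 < p) (hs0 : 0 < s) (hs1 : s < 1) (hlam : 0 < lam)
    (hLam : 0 ≤ Lam) (D : ℝ) : 0 < logEnergyConst n p s lam Lam D := by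
  have hc : 0 < cnps n p s := cnps_pos (one_pos.trans hp) hs1
  have := interactionConst_pos hp
  have := enlargedBallVolume_pos n
  have := truncatedKernelMass_nonneg (n := n) (p := p) (s := s)
  have := sphereArea_pos hn
  have : 0 < p - 1 := by linarith
  have : 0 < max 1 D := lt_max_of_lt_left one_pos
  unfold logEnergyConst
  positivity

lemma add_mul_add_mul_le_mul {a₁ a₂ a₃ X Y : ℝ} (h₁ : 0 ≤ a₁) (h₂ : 0 ≤ a₂) (h₃ : 0 ≤ a₃)
    (hX : 0 ≤ X) (hY : 0 ≤ Y) : a₁ + a₂ * X + a₃ * Y ≤ (a₁ + a₂ + a₃) * (X + (1 + Y)) := by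
  nlinarith [mul_nonneg h₁ hX, mul_nonneg h₁ hY, mul_nonneg h₂ hY, mul_nonneg h₃ hX]

lemma rpow_mul_rpow_neg_eq {ν a : ℝ} (hr : 0 < r) (hR : 0 < R) :
    r ^ ν * R ^ (-a) = r ^ (ν - a) * (r / R) ^ a := by
  rw [div_rpow hr.le hR.le, rpow_neg hR.le, div_eq_mul_inv, ← mul_assoc, ← rpow_add hr,
    sub_add_cancel]

lemma le_mul_logEnergyConst {β τ N : ℝ} (hn : 1 ≤ n) (hp : 1 < p) (hs0 : 0 < s) (hs1 : s < 1)
    (hlam : 0 < lam) (hLam : 0 ≤ Lam) (hq1 : 1 < q) (hq : n / (p * s) < q) (hr : 0 < r)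
    (hrD : r ≤ D) (hR : 0 < R) (hβ : 0 ≤ β) (hτ : 0 ≤ τ) (hN : 0 ≤ N) (x₀ : Rn n) :
    cnps n p s * Lam * interactionConst p *
          (2 * (volume.real (ball x₀ (3 / 2 * r)) * (r ^ (-(p * s)) * truncatedKernelMass n p s)) +
            β * (4 ^ ((n : ℝ) + p * s) * (2 * (volume.real (ball x₀ (3 / 2 * r)) *
              (sphereArea n / (p * s) * R ^ (-(p * s)) * τ))))) +
        N * volume.real (ball x₀ (3 / 2 * r)) ^ (1 - 1 / q) ≤
      (p - 1) * (cnps n p s * lam) * (logEnergyConst n p s lam Lam D * r ^ ((n : ℝ) - p * s) *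
        (β * (r / R) ^ (p * s) * τ + (1 + N))) := by
  have hp0 : 0 < p := one_pos.trans hp
  have hc : 0 < cnps n p s := cnps_pos hp0 hs1
  have := interactionConst_pos hp
  have hJ := truncatedKernelMass_nonneg (n := n) (p := p) (s := s)
  have := sphereArea_pos hn
  have hM := enlargedBallVolume_pos n
  have hk : (p - 1) * (cnps n p s * lam) ≠ 0 :=
    mul_ne_zero (by linarith) (mul_ne_zero hc.ne' hlam.ne')
  have hE : (p - 1) * (cnps n p s * lam) * logEnergyConst n p s lam Lam D = _ :=
    mul_div_cancel₀ _ hk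
  rw [volume_real_ball_enlarged hr]
  have hpot := mul_le_mul_of_nonneg_left
    (mul_rpow_one_sub_le n.cast_nonneg (mul_pos hp0 hs0) hq1 hq hr hrD hM.le) hN
  have hcut := rpow_mul_rpow_neg_eq (ν := n) (a := p * s) hr hr
  have hfar := rpow_mul_rpow_neg_eq (ν := n) (a := p * s) hr hR
  rw [div_self hr.ne', Real.one_rpow, mul_one] at hcut
  set A := cnps n p s * Lam * interactionConst p
  set M := enlargedBallVolume n
  set J := truncatedKernelMass n p s
  set S := sphereArea n / (p * s)
  set F : ℝ := 4 ^ ((n : ℝ) + p * s)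
  set P := r ^ ((n : ℝ) - p * s)
  set Y := (r / R) ^ (p * s)
  set G := max 1 M * max 1 D ^ (p * s)
  have : 0 ≤ A := by positivity
  have : 0 ≤ P := by positivity
  have hsum : A * (2 * M * J) + A * (F * (2 * M * S)) * (β * Y * τ) + G * N ≤
      (A * (2 * M * J) + A * (F * (2 * M * S)) + G) * (β * Y * τ + (1 + N)) :=
    add_mul_add_mul_le_mul (by positivity) (by positivity) (by positivity) (by positivity) hN
  linear_combination hpot + P * hsum + A * (2 * M * J) * hcut + A * β * F * 2 * M * S * τ * hfar -
    P * (β * Y * τ + (1 + N)) * hE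

lemma setIntegral_gagliardoIntegrand_log_le (hn : 1 ≤ n) (hp : 1 < p) (hs0 : 0 < s)
    (hs1 : s < 1) (hlam : 0 < lam) (hLam : 0 ≤ Lam) (hq1 : 1 < q) (hq : n / (p * s) < q)
    (hΩ : Bornology.IsBounded Ω) (hV : Measurable V) (hVminus : IntegrableOn (minusPart V) Ω)
    (hVplus : IntegrableOn (fun x => plusPart V x ^ q) Ω) (hK : KernelClass n p s lam Lam K)
    (hu : MemX n p s Ω u)
    (hsuper : ∀ φ, MemY0 n p s Ω V φ → (∀ x, 0 ≤ φ x) →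
      0 ≤ pairing n p K u φ + ∫ x, V x * (|u x| ^ (p - 2) * u x) * φ x)
    (hsub : ball x₀ R ⊆ Ω) (hu0 : ∀ x ∈ ball x₀ R, 0 ≤ u x) (hb : 0 < b) (hr : 0 < r)
    (hrR : r < R / 2) :
    ∫ z in ball x₀ r ×ˢ ball x₀ r, gagliardoIntegrand n p s (fun x => log (u x + b)) z ≤
      logEnergyConst n p s lam Lam (diam Ω) * r ^ ((n : ℝ) - p * s) *
        (b ^ (1 - p) * (r / R) ^ (p * s) * tail n p s (minusPart u) x₀ R ^ (p - 1) +
          (1 + lqNormOn n q Ω (plusPart V))) := by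
  have hp0 : 0 < p := one_pos.trans hp
  have hR : 0 < R := by linarith
  have hk : 0 < (p - 1) * (cnps n p s * lam) :=
    mul_pos (by linarith) (mul_pos (cnps_pos hp0 hs1) hlam)
  have henergy := mul_setIntegral_gagliardoIntegrand_log_le hn hp hs0 hs1 hlam.le hLam hq1 hΩ hV
    hVminus hVplus hK hu hsuper hsub hu0 hb hr hrR
  exact le_of_mul_le_mul_left (henergy.trans <|
    le_mul_logEnergyConst hn hp hs0 hs1 hlam hLam hq1 hq hr
      (le_diam_of_ball_subset hn hr (by linarith) hΩ hsub) hR (by positivity)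
      (rpow_nonneg (tail_nonneg hn hp0 hs0 hR _ _) _) (lqNormOn_nonneg q Ω _) x₀) hk

end LogEnergy

section FractionalPoincare

variable {n : ℕ} {p s r : ℝ} {x₀ : Rn n} {f : Rn n → ℝ}

lemma abs_sub_rpow_le_mul_gagliardoIntegrand (hp : 0 < p) (hs : 0 ≤ s) (f : Rn n → ℝ)
    {z : Rn n × Rn n} (hz : z ∈ ball x₀ r ×ˢ ball x₀ r) :
    |f z.1 - f z.2| ^ p ≤ (2 * r) ^ ((n : ℝ) + p * s) * gagliardoIntegrand n p s f z := by
  rcases eq_or_ne z.1 z.2 with h | h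
  · rw [gagliardoIntegrand_eq_zero hp.ne' f h, h, sub_self, abs_zero, zero_rpow hp.ne', mul_zero]
  have hpos : 0 < ‖z.1 - z.2‖ := norm_sub_pos_iff.2 h
  have hle : ‖z.1 - z.2‖ ≤ 2 * r := by
    have h₁ := mem_ball.1 hz.1
    have h₂ := mem_ball'.1 hz.2
    rw [← dist_eq_norm]
    linarith [dist_triangle z.1 x₀ z.2]
  have hpow : 0 < ‖z.1 - z.2‖ ^ ((n : ℝ) + p * s) := by positivity
  rw [gagliardoIntegrand, show -(n : ℝ) - p * s = -(n + p * s) by ring, rpow_neg hpos.le,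
    mul_left_comm, ← div_eq_mul_inv]
  exact le_mul_of_one_le_right (by positivity)
    ((one_le_div hpow).2 (rpow_le_rpow hpos.le hle (by positivity)))

lemma integrableOn_abs_sub_rpow (hp : 0 < p) (hs : 0 ≤ s) (hf : Measurable f)
    (hG : IntegrableOn (gagliardoIntegrand n p s f) (ball x₀ r ×ˢ ball x₀ r)) :
    IntegrableOn (fun z : Rn n × Rn n => |f z.1 - f z.2| ^ p) (ball x₀ r ×ˢ ball x₀ r) := by
  have hmeas : Measurable fun z : Rn n × Rn n => |f z.1 - f z.2| ^ p := by fun_prop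
  refine (hG.const_mul ((2 * r) ^ ((n : ℝ) + p * s))).mono' hmeas.aestronglyMeasurable ?_
  filter_upwards [ae_restrict_mem (measurableSet_ball.prod measurableSet_ball)] with z hz
  rw [norm_of_nonneg (by positivity)]
  exact abs_sub_rpow_le_mul_gagliardoIntegrand hp hs f hz

lemma prod_restrict_ball (x₀ : Rn n) (r : ℝ) :
    (volume.restrict (ball x₀ r)).prod (volume.restrict (ball x₀ r)) =
      volume.restrict (ball x₀ r ×ˢ ball x₀ r) := by
  rw [Measure.prod_restrict, Measure.volume_eq_prod]

instance isFiniteMeasure_restrict_ball (x₀ : Rn n) (r : ℝ) :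
    IsFiniteMeasure (volume.restrict (ball x₀ r)) :=
  isFiniteMeasure_restrict.2 measure_ball_lt_top.ne

lemma neZero_restrict_ball (hr : 0 < r) (x₀ : Rn n) : NeZero (volume.restrict (ball x₀ r)) :=
  ⟨Measure.restrict_eq_zero.not.2 (measure_ball_pos _ _ hr).ne'⟩

variable (hp : 1 ≤ p) (hs : 0 ≤ s) (hr : 0 < r) (hf : Measurable f)
  (hfint : IntegrableOn f (ball x₀ r))
  (hG : IntegrableOn (gagliardoIntegrand n p s f) (ball x₀ r ×ˢ ball x₀ r))

include hp hs hr hf hfint hG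

lemma integrableOn_abs_sub_setAverage_rpow :
    IntegrableOn (fun x => |f x - ⨍ y in ball x₀ r, f y| ^ p) (ball x₀ r) := by
  have := neZero_restrict_ball hr x₀
  refine integrable_abs_sub_average_rpow hp hfint ?_
  rw [prod_restrict_ball]
  exact integrableOn_abs_sub_rpow (by linarith) hs hf hG

lemma setAverage_abs_sub_setAverage_le :
    ⨍ x in ball x₀ r, |f x - ⨍ y in ball x₀ r, f y| ≤
      (⨍ x in ball x₀ r, |f x - ⨍ y in ball x₀ r, f y| ^ p) ^ (1 / p) := by
  have := neZero_restrict_ball hr x₀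
  exact average_abs_le_rpow_average hp (hfint.sub (integrable_const _))
    (integrableOn_abs_sub_setAverage_rpow hp hs hr hf hfint hG)

lemma setAverage_abs_sub_setAverage_rpow_le :
    ⨍ x in ball x₀ r, |f x - ⨍ y in ball x₀ r, f y| ^ p ≤
      2 ^ ((n : ℝ) + p * s) / volume.real (ball (0 : Rn n) 1) ^ 2 * r ^ (p * s - n) *
        ∫ z in ball x₀ r ×ˢ ball x₀ r, gagliardoIntegrand n p s f z := by
  have := neZero_restrict_ball hr x₀
  have hp0 : 0 < p := by linarith
  have hint := integrableOn_abs_sub_rpow hp0 hs hf hG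
  have hosc := average_abs_sub_average_rpow_le hp hfint (by rwa [prod_restrict_ball])
  have hgag : ∫ z in ball x₀ r ×ˢ ball x₀ r, |f z.1 - f z.2| ^ p ≤
      (2 * r) ^ ((n : ℝ) + p * s) *
        ∫ z in ball x₀ r ×ˢ ball x₀ r, gagliardoIntegrand n p s f z := by
    rw [← integral_const_mul]
    exact setIntegral_mono_on hint (hG.const_mul _)
      (measurableSet_ball.prod measurableSet_ball)
      fun z hz => abs_sub_rpow_le_mul_gagliardoIntegrand hp0 hs f hz
  rw [prod_restrict_ball, measureReal_restrict_apply_univ,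
    volume_real_ball_eq_rpow_mul hr] at hosc
  refine hosc.trans ((mul_le_mul_of_nonneg_left (mul_le_mul_of_nonneg_left hgag (by positivity))
    (by positivity)).trans_eq ?_)
  have hrn : r ^ (n : ℝ) ≠ 0 := by positivity
  rw [mul_rpow two_pos.le hr.le, rpow_add hr, rpow_sub hr]
  field_simp

end FractionalPoincare

section LogOscillation

variable {n : ℕ} {p s q lam Lam a b r R : ℝ} {x₀ : Rn n} {K V u : Rn n → ℝ} {Ω : Set (Rn n)}

lemma log_add_div_add_eq {x : ℝ} (ha : 0 < a) (hb : 0 < b) (hx : 0 ≤ x) :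
    log ((a + b) / (x + b)) = log (a + b) - log (x + b) :=
  log_div (by positivity) (by positivity)

lemma measurable_log_add_div_add (a b : ℝ) (hu : Measurable u) :
    Measurable fun x => log ((a + b) / (u x + b)) := by
  fun_prop

lemma integrableOn_log_add_div_add (hp : 1 ≤ p) (ha : 0 < a) (hb : 0 < b) (hu : Measurable u)
    (hup : IntegrableOn (fun x => |u x| ^ p) (ball x₀ r)) (hu0 : ∀ x ∈ ball x₀ r, 0 ≤ u x) :
    IntegrableOn (fun x => log ((a + b) / (u x + b))) (ball x₀ r) := by
  have hdom : IntegrableOn (fun x => |log (a + b) - log b| + b⁻¹ * (1 + |u x| ^ p)) (ball x₀ r) :=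
    (integrable_const _).add (((integrable_const _).add hup).const_mul _)
  refine hdom.mono' (measurable_log_add_div_add a b hu).aestronglyMeasurable ?_
  filter_upwards [ae_restrict_mem measurableSet_ball] with x hx
  have hlog := abs_log_sub_log_le hb le_rfl (le_add_of_nonneg_left (hu0 x hx))
  rw [sub_add_cancel_right, abs_neg] at hlog
  rw [log_add_div_add_eq ha hb (hu0 x hx), norm_eq_abs]
  calc |log (a + b) - log (u x + b)|
      ≤ |log (a + b) - log b| + |log b - log (u x + b)| := abs_sub_le _ _ _
    _ ≤ |log (a + b) - log b| + b⁻¹ * (1 + |u x| ^ p) := by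
      gcongr
      exact hlog.trans (mul_le_mul_of_nonneg_left (le_one_add_rpow hp (abs_nonneg _))
        (inv_nonneg.2 hb.le))

/-- The constant of the logarithmic oscillation estimate on the balls of a domain of diameter
`D`. -/
def oscillationConst (n : ℕ) (p s lam Lam D : ℝ) : ℝ :=
  2 ^ ((n : ℝ) + p * s) / volume.real (ball (0 : Rn n) 1) ^ 2 * logEnergyConst n p s lam Lam D

lemma oscillationConst_pos (hn : 1 ≤ n) (hp : 1 < p) (hs0 : 0 < s) (hs1 : s < 1)
    (hlam : 0 < lam) (hLam : 0 ≤ Lam) (D : ℝ) : 0 < oscillationConst n p s lam Lam D :=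
  mul_pos (div_pos (by positivity) (pow_pos (volume_real_ball_pos one_pos 0) 2))
    (logEnergyConst_pos hn hp hs0 hs1 hlam hLam D)

lemma gagliardoIntegrand_log_add_div_add_eqOn (ha : 0 < a) (hb : 0 < b)
    (hu0 : ∀ x ∈ ball x₀ r, 0 ≤ u x) :
    EqOn (gagliardoIntegrand n p s fun x => log ((a + b) / (u x + b)))
      (gagliardoIntegrand n p s fun x => log (u x + b)) (ball x₀ r ×ˢ ball x₀ r) := fun z hz => by
  simp only [gagliardoIntegrand, log_add_div_add_eq ha hb (hu0 _ hz.1),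
    log_add_div_add_eq ha hb (hu0 _ hz.2), _root_.sub_sub_sub_cancel_left]
  rw [abs_sub_comm]

lemma integrableOn_gagliardoIntegrand_log_add_div_add (hp : 0 ≤ p) (ha : 0 < a) (hb : 0 < b)
    (hrR : r ≤ R) (hu : MemX n p s Ω u) (hsub : ball x₀ R ⊆ Ω)
    (hu0 : ∀ x ∈ ball x₀ R, 0 ≤ u x) :
    IntegrableOn (gagliardoIntegrand n p s fun x => log ((a + b) / (u x + b)))
      (ball x₀ r ×ˢ ball x₀ r) :=
  (integrableOn_congr_fun
    (gagliardoIntegrand_log_add_div_add_eqOn ha hb fun x hx => hu0 x (ball_subset_ball hrR hx))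
    (measurableSet_ball.prod measurableSet_ball)).2
    (integrableOn_gagliardoIntegrand_log hp hb hrR hu hsub hu0)

variable (hn : 1 ≤ n) (hp : 1 < p) (hs0 : 0 < s) (hs1 : s < 1) (hlam : 0 < lam) (hLam : 0 ≤ Lam)
  (hq1 : 1 < q) (hq : n / (p * s) < q) (hΩ : Bornology.IsBounded Ω) (hV : Measurable V)
  (hVminus : IntegrableOn (minusPart V) Ω) (hVplus : IntegrableOn (fun x => plusPart V x ^ q) Ω)
  (hK : KernelClass n p s lam Lam K) (hu : MemX n p s Ω u)
  (hsuper : ∀ φ, MemY0 n p s Ω V φ → (∀ x, 0 ≤ φ x) →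
    0 ≤ pairing n p K u φ + ∫ x, V x * (|u x| ^ (p - 2) * u x) * φ x)
  (hsub : ball x₀ R ⊆ Ω) (hu0 : ∀ x ∈ ball x₀ R, 0 ≤ u x) (ha : 0 < a) (hb : 0 < b)
  (hr : 0 < r) (hrR : r < R / 2)

include hn hp hs0 hs1 hlam hLam hq1 hq hΩ hV hVminus hVplus hK hu hsuper hsub hu0 ha hb hr hrR

lemma setAverage_abs_sub_setAverage_log_rpow_le :
    ⨍ x in ball x₀ r, |log ((a + b) / (u x + b)) -
        ⨍ y in ball x₀ r, log ((a + b) / (u y + b))| ^ p ≤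
      oscillationConst n p s lam Lam (diam Ω) * (1 / b ^ (p - 1) * (r / R) ^ (p * s) *
        tail n p s (minusPart u) x₀ R ^ (p - 1) + (1 + lqNormOn n q Ω (plusPart V))) := by
  have hrR' : r ≤ R := by linarith
  have hsubr : ball x₀ r ⊆ ball x₀ R := ball_subset_ball hrR'
  have hu0r : ∀ x ∈ ball x₀ r, 0 ≤ u x := fun x hx => hu0 x (hsubr hx)
  have henergy := setIntegral_gagliardoIntegrand_log_le hn hp hs0 hs1 hlam hLam hq1 hq hΩ hV
    hVminus hVplus hK hu hsuper hsub hu0 hb hr hrR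
  have hpoincare := setAverage_abs_sub_setAverage_rpow_le hp.le hs0.le hr
    (measurable_log_add_div_add a b hu.1)
    (integrableOn_log_add_div_add hp.le ha hb hu.1 (hu.2.1.mono_set (hsubr.trans hsub)) hu0r)
    (integrableOn_gagliardoIntegrand_log_add_div_add (one_pos.trans hp).le ha hb hrR' hu hsub hu0)
  rw [setIntegral_congr_fun (measurableSet_ball.prod measurableSet_ball)
    (gagliardoIntegrand_log_add_div_add_eqOn ha hb hu0r)] at hpoincare
  refine hpoincare.trans ((mul_le_mul_of_nonneg_left henergy (by positivity)).trans_eq ?_)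
  have hscale : r ^ (p * s - n) * r ^ ((n : ℝ) - p * s) = 1 := by
    rw [← rpow_add hr, sub_add_sub_cancel, sub_self, Real.rpow_zero]
  rw [oscillationConst, one_div, ← rpow_neg hb.le, neg_sub]
  linear_combination 2 ^ ((n : ℝ) + p * s) / volume.real (ball (0 : Rn n) 1) ^ 2 *
    logEnergyConst n p s lam Lam (diam Ω) * (b ^ (1 - p) * (r / R) ^ (p * s) *
      tail n p s (minusPart u) x₀ R ^ (p - 1) + (1 + lqNormOn n q Ω (plusPart V))) * hscale

lemma setAverage_abs_sub_setAverage_log_le :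
    ⨍ x in ball x₀ r, |log ((a + b) / (u x + b)) -
        ⨍ y in ball x₀ r, log ((a + b) / (u y + b))| ≤
      oscillationConst n p s lam Lam (diam Ω) ^ (1 / p) * (1 / b ^ (p - 1) *
        tail n p s (minusPart u) x₀ R ^ (p - 1) +
          (1 + lqNormOn n q Ω (plusPart V))) ^ (1 / p) := by
  have hp0 : 0 < p := one_pos.trans hp
  have hR : 0 < R := by linarith
  have hrR' : r ≤ R := by linarith
  have hsubr : ball x₀ r ⊆ ball x₀ R := ball_subset_ball hrR'
  have hC := oscillationConst_pos hn hp hs0 hs1 hlam hLam (diam Ω)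
  have hN := lqNormOn_nonneg q Ω (plusPart V)
  have hT := tail_nonneg hn hp0 hs0 hR (minusPart u) x₀
  have hosc := setAverage_abs_sub_setAverage_log_rpow_le hn hp hs0 hs1 hlam hLam hq1 hq hΩ hV
    hVminus hVplus hK hu hsuper hsub hu0 ha hb hr hrR
  have hjensen := setAverage_abs_sub_setAverage_le hp.le hs0.le hr
    (measurable_log_add_div_add a b hu.1)
    (integrableOn_log_add_div_add hp.le ha hb hu.1 (hu.2.1.mono_set (hsubr.trans hsub))
      fun x hx => hu0 x (hsubr hx))
    (integrableOn_gagliardoIntegrand_log_add_div_add hp0.le ha hb hrR' hu hsub hu0)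
  have hratio : (r / R) ^ (p * s) ≤ 1 :=
    rpow_le_one (by positivity) ((div_le_one hR).2 hrR') (by positivity)
  rw [← mul_rpow hC.le (by positivity)]
  refine hjensen.trans (rpow_le_rpow (integral_nonneg fun x => by positivity) (hosc.trans ?_)
    (by positivity))
  gcongr
  exact mul_le_of_le_one_right (by positivity) hratio

end LogOscillation

theorem log_of_supersolution_bmo_general
    (n : ℕ) (hn : 1 ≤ n) (p s lam Lam : ℝ) (hp : 1 < p) (hs0 : 0 < s) (hs1 : s < 1)
    (hlam : 0 < lam) (hLam : 0 ≤ Lam) (Ω : Set (Rn n)) (hΩ : Bornology.IsBounded Ω) :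
    ∃ C C' : ℝ, 0 < C ∧ 0 < C' ∧
      ∀ q : ℝ, 1 < q → (n : ℝ) / (p * s) < q →
      ∀ V : Rn n → ℝ, Measurable V → IntegrableOn (minusPart V) Ω →
        IntegrableOn (fun x => plusPart V x ^ q) Ω →
      ∀ K : Rn n → ℝ, KernelClass n p s lam Lam K →
      ∀ u : Rn n → ℝ, MemX n p s Ω u →
        (∀ φ, MemY0 n p s Ω V φ → (∀ x, 0 ≤ φ x) →
          0 ≤ pairing n p K u φ + ∫ x, V x * (|u x| ^ (p - 2) * u x) * φ x) →
      ∀ (x₀ : Rn n) (R : ℝ), ball x₀ R ⊆ Ω → (∀ x ∈ ball x₀ R, 0 ≤ u x) →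
      ∀ a b : ℝ, 0 < a → 0 < b →
      let v : Rn n → ℝ := fun x => log ((a + b) / (u x + b))
      (∀ r : ℝ, 0 < r → r < R / 2 →
        ⨍ x in ball x₀ r, |v x - ⨍ y in ball x₀ r, v y| ^ p ≤
          C * (1 / b ^ (p - 1) * (r / R) ^ (p * s) * tail n p s (minusPart u) x₀ R ^ (p - 1) +
            (1 + lqNormOn n q Ω (plusPart V)))) ∧
      (∀ r : ℝ, 0 < r → r < R / 2 →
        ⨍ x in ball x₀ r, |v x - ⨍ y in ball x₀ r, v y| ≤
          C' * (1 / b ^ (p - 1) * tail n p s (minusPart u) x₀ R ^ (p - 1) +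
            (1 + lqNormOn n q Ω (plusPart V))) ^ (1 / p)) := by
  have hC := oscillationConst_pos hn hp hs0 hs1 hlam hLam (diam Ω)
  refine ⟨_, oscillationConst n p s lam Lam (diam Ω) ^ (1 / p), hC, by positivity, ?_⟩
  intro q hq1 hq V hV hVminus hVplus K hK u hu hsuper x₀ R hsub hu0 a b ha hb
  exact ⟨fun r => setAverage_abs_sub_setAverage_log_rpow_le hn hp hs0 hs1 hlam hLam hq1 hq hΩ hV
      hVminus hVplus hK hu hsuper hsub hu0 ha hb,
    fun r => setAverage_abs_sub_setAverage_log_le hn hp hs0 hs1 hlam hLam hq1 hq hΩ hV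
      hVminus hVplus hK hu hsuper hsub hu0 ha hb⟩

/-- the logarithm of a weak supersolution has bounded mean
oscillation (Lemma 5.1). -/
theorem log_of_supersolution_bmo
    (n : ℕ) (hn : 1 ≤ n) (p s lam Lam : ℝ)
    (hp : 1 < p) (hs0 : 0 < s) (hs1 : s < 1)
    (hlam : 0 < lam) (hlamLam : lam ≤ Lam)
    (Ω : Set (Rn n)) (hΩopen : IsOpen Ω) (hΩconn : IsConnected Ω)
    (hΩbdd : Bornology.IsBounded Ω) :
    ∃ C C' : ℝ, 0 < C ∧ 0 < C' ∧
      ∀ q : ℝ, (n : ℝ) / (p * s) < q → 1 < (n : ℝ) / (p * s) →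
      ∀ V : Rn n → ℝ, IsPotential n p s q V →
      ∀ g : Rn n → ℝ, MemWsp n p s Set.univ g →
      ∀ K : Rn n → ℝ, KernelClass n p s lam Lam K →
      ∀ u : Rn n → ℝ, WeakSupersolution n p s Ω K V g u →
      ∀ (x₀ : Rn n) (R : ℝ), 0 < R → Metric.ball x₀ R ⊆ Ω →
        (∀ x ∈ Metric.ball x₀ R, 0 ≤ u x) →
      ∀ a b : ℝ, 0 < a → a < 1 → 0 < b → b < 1 →
      let v : Rn n → ℝ := fun x => Real.log ((a + b) / (u x + b))
      (∀ r : ℝ, 0 < r → r < R / 2 →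
        (⨍ x in Metric.ball x₀ r, |v x - (⨍ y in Metric.ball x₀ r, v y)| ^ p) ≤
          C * (1 / b ^ (p - 1) * (r / R) ^ (p * s) *
                tail n p s (minusPart u) x₀ R ^ (p - 1) +
              (1 + lqNormOn n q Ω (plusPart V)))) ∧
      (∀ r : ℝ, 0 < r → r < R / 2 →
        (⨍ x in Metric.ball x₀ r, |v x - (⨍ y in Metric.ball x₀ r, v y)|) ≤
          C' * (1 / b ^ (p - 1) * tail n p s (minusPart u) x₀ R ^ (p - 1) +
              (1 + lqNormOn n q Ω (plusPart V))) ^ (1 / p)) := by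
  obtain ⟨C, C', hC, hC', hbound⟩ := log_of_supersolution_bmo_general n hn p s lam Lam hp hs0 hs1
    hlam (hlam.le.trans hlamLam) Ω hΩbdd
  refine ⟨C, C', hC, hC', fun q hq hq1 V hV g _ K hK u hu x₀ R _ hsub hu0 a b ha _ hb _ => ?_⟩
  have hlocal {f : Rn n → ℝ} (hf : LocallyIntegrable f volume) : IntegrableOn f Ω :=
    (hf.integrableOn_isCompact hΩbdd.isCompact_closure).mono_set subset_closure
  exact hbound q (hq1.trans hq) hq V hV.measurable (hlocal hV.minusPart_locInt)
    (hlocal hV.plusPart_locLq) K hK u hu.1.1.1 hu.2 x₀ R hsub hu0 a b ha hb
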